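/- arXiv:1103.0729 — 2 statements merged into one kernel-verified Lean document; each statement's English description precedes it below -/
import Mathlib

section
/- Let f be a homogeneous polynomial of degree p ≥ 2 on ℝⁿ (f(t·x) = t^p·f(x) for all t ≥ 0 and x). Let γ be a half-trajectory of the unit gradient field of f with f negative and increasing along γ and γ(s) → O, and let ν be its limit of secants. Then f(ν) ≠ 0, and ν is an eigen-vector of Hs(f)(ν) with nonzero eigen-value: Hs(f)(ν)·ν = p(p−1)·f(ν)·ν, where p(p−1)·f(ν) ≠ 0. -/
open scoped RealInnerProductSpace Topology
open Filter


section PartA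

/-- Newton polygon lemma: an algebraic element has value a rational power of `v c`. -/
lemma ptA_slope {K F Γ₀ : Type*} [Field K] [Field F] [Algebra K F]
    [LinearOrderedCommGroupWithZero Γ₀] (v : Valuation F Γ₀) (c : F)
    (h1 : ∀ a : K, a ≠ 0 → ∃ l : ℤ, v (algebraMap K F a) = v c ^ l)
    (hc0 : c ≠ 0)
    (y : F) (hy : y ≠ 0) (Q : Polynomial K) (hQ : Q ≠ 0) (hQy : Polynomial.aeval y Q = 0) :
    ∃ (k : ℕ) (l : ℤ), 1 ≤ k ∧ k ≤ Q.natDegree ∧ v y ^ k = v c ^ l := by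
  classical
  have hsum : ∑ i ∈ Q.support, algebraMap K F (Q.coeff i) * y ^ i = 0 := by
    rw [← hQy, Polynomial.aeval_eq_sum_range, Polynomial.support]
    rw [← Polynomial.sum_over_range' (f := fun i a => a • y ^ i) Q (by simp) (Q.natDegree + 1) (by omega)]
    simp [Polynomial.sum_def, Algebra.smul_def, Polynomial.support]
  set T : ℕ → F := fun i => algebraMap K F (Q.coeff i) * y ^ i with hT
  have hne : Q.support.Nonempty := Polynomial.support_nonempty.mpr hQ
  obtain ⟨j, hj, hmax⟩ := Finset.exists_max_image Q.support (fun i => v (T i)) hne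
  have hTne : ∀ i ∈ Q.support, T i ≠ 0 := by
    intro i hi
    have : Q.coeff i ≠ 0 := Polynomial.mem_support_iff.mp hi
    simp [hT, this, hy]
  have hex : ∃ i ∈ Q.support, i ≠ j ∧ v (T i) = v (T j) := by
    by_contra! hcon
    have h := Valuation.map_sum_eq_of_lt v (s := Q.support) (f := T) hj (by
      intro i hi
      simp only [Finset.mem_sdiff, Finset.mem_singleton] at hi
      exact lt_of_le_of_ne (hmax i hi.1) (hcon i hi.1 hi.2))
    rw [hsum, map_zero] at h
    exact hTne j hj ((map_eq_zero v).mp h.symm)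
  obtain ⟨i, hi, hij, hv⟩ := hex
  have key : ∀ i j : ℕ, i ∈ Q.support → j ∈ Q.support → i < j → v (T i) = v (T j) →
      ∃ (k : ℕ) (l : ℤ), 1 ≤ k ∧ k ≤ Q.natDegree ∧ v y ^ k = v c ^ l := by
    intro i j hi hj hij h
    obtain ⟨li, hli⟩ := h1 _ (Polynomial.mem_support_iff.mp hi)
    obtain ⟨lj, hlj⟩ := h1 _ (Polynomial.mem_support_iff.mp hj)
    have hvc : v c ≠ 0 := (map_ne_zero v).mpr hc0
    have hvy : v y ≠ 0 := (map_ne_zero v).mpr hy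
    refine ⟨j - i, li - lj, by omega, ?_, ?_⟩
    · have := Polynomial.le_natDegree_of_mem_supp j hj
      omega
    · simp only [hT, map_mul, map_pow, hli, hlj] at h
      rw [zpow_sub₀ hvc, eq_div_iff (zpow_ne_zero _ hvc)]
      have h2 : v y ^ j = v y ^ (j - i) * v y ^ i := by rw [← pow_add]; congr 1; omega
      rw [h2, ← mul_assoc] at h
      have := mul_right_cancel₀ (pow_ne_zero i hvy) h
      rw [this, mul_comm]
  rcases lt_or_gt_of_ne hij with h | h
  · exact key i j hi hj h hv
  · exact key j i hj hi h hv.symm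

/-- Integrality of the Horner tails. -/
lemma ptA_tail {F : Type*} [Field F] (O : Subring F) (a : ℕ → F) (ha : ∀ i, a i ∈ O) (N : ℕ) (y : F)
    (hy : ∑ i ∈ Finset.range (N + 1), a i * y ^ i = 0) (j : ℕ) (hj : j ≤ N + 1) :
    IsIntegral O (∑ i ∈ Finset.Ico j (N + 1), a i * y ^ (i - j)) := by
  have hmem : (∑ i ∈ Finset.Ico j (N + 1), a i * y ^ (i - j)) ∈
      (integralClosure (Subring.closure (O : Set F)) F).toSubring := by
    rw [← iInf_valuationSubring_superset, Subring.mem_iInf]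
    rintro ⟨V, hV⟩
    have haV : ∀ i, a i ∈ V := fun i => hV (ha i)
    by_cases hyV : y ∈ V
    · exact sum_mem fun i _ => mul_mem (haV i) (pow_mem hyV _)
    · have hy' : y⁻¹ ∈ V := (V.mem_or_inv_mem y).resolve_left hyV
      have hy0 : y ≠ 0 := by rintro rfl; exact hyV (zero_mem V)
      have : (∑ i ∈ Finset.Ico j (N + 1), a i * y ^ (i - j)) =
          - ∑ i ∈ Finset.range j, a i * (y⁻¹) ^ (j - i) := by
        rw [← Finset.sum_range_add_sum_Ico _ hj] at hy
        have h2 : y ^ j * (∑ i ∈ Finset.Ico j (N + 1), a i * y ^ (i - j)) =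
            ∑ i ∈ Finset.Ico j (N + 1), a i * y ^ i := by
          rw [Finset.mul_sum]
          refine Finset.sum_congr rfl fun i hi => ?_
          rw [Finset.mem_Ico] at hi
          have : y ^ i = y ^ j * y ^ (i - j) := by rw [← pow_add]; congr 1; omega
          rw [this]; ring
        have h3 : y ^ j * ∑ i ∈ Finset.range j, a i * (y⁻¹) ^ (j - i) =
            ∑ i ∈ Finset.range j, a i * y ^ i := by
          rw [Finset.mul_sum]
          refine Finset.sum_congr rfl fun i hi => ?_
          rw [Finset.mem_range] at hi
          have : y ^ j = y ^ i * y ^ (j - i) := by rw [← pow_add]; congr 1; omega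
          rw [this, inv_pow]
          field_simp
        apply mul_left_cancel₀ (pow_ne_zero j hy0)
        rw [mul_neg, h2, h3]
        linear_combination hy
      rw [this]
      exact neg_mem (sum_mem fun i _ => mul_mem (haV i) (pow_mem hy' _))
  have h := Subalgebra.mem_toSubring.mp hmem
  rw [mem_integralClosure_iff] at h
  rw [Subring.closure_eq] at h
  exact h

/-- any `v`-integral algebraic element is a quotient of integral elements with unit denominator. -/
lemma ptA_quot {F Γ₀ : Type*} [Field F]
    [LinearOrderedCommGroupWithZero Γ₀] (v : Valuation F Γ₀) (O : Subring F)
    (hO : ∀ x ∈ O, v x ≤ 1) (a : ℕ → F) (ha : ∀ i, a i ∈ O) (N : ℕ) (y : F)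
    (hy : ∑ i ∈ Finset.range (N + 1), a i * y ^ i = 0) (hvy : v y ≤ 1)
    (m : ℕ) (hm : m ≤ N) (hvm : v (a m) = 1) (L : Subring F) (haL : ∀ i, a i ∈ L) (hyL : y ∈ L) :
    ∃ s ∈ L, IsIntegral O s ∧ IsIntegral O (s * y) ∧ v s = 1 := by
  set U : ℕ → F := fun j => ∑ i ∈ Finset.Ico j (N + 1), a i * y ^ (i - j) with hU
  have hisInt : ∀ j ≤ N + 1, IsIntegral O (U j) := fun j hj => ptA_tail O a ha N y hy j hj
  have hUL : ∀ j, U j ∈ L := fun j => sum_mem fun i _ => mul_mem (haL i) (pow_mem hyL _)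
  have hrec : ∀ j ≤ N, U j = a j + y * U (j + 1) := by
    intro j hj
    simp only [hU]
    rw [← Finset.sum_Ioo_add_eq_sum_Ico (by omega : j < N + 1)]
    rw [add_comm]; congr 1
    · simp
    · rw [Finset.mul_sum]
      have : Finset.Ioo j (N + 1) = Finset.Ico (j + 1) (N + 1) := by ext; simp
      rw [this]
      refine Finset.sum_congr rfl fun i hi => ?_
      rw [Finset.mem_Ico] at hi
      have : i - j = (i - (j + 1)) + 1 := by omega
      rw [this, pow_succ]; ring
  have hU0 : U 0 = 0 := by simpa [hU] using hy
  have hvint : ∀ x, IsIntegral O x → v x ≤ 1 := by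
    intro x hx
    have : (O : Set F) ⊆ v.valuationSubring := fun x hx => hO x hx
    have hx2 : IsIntegral v.valuationSubring x := by
      obtain ⟨p, hp, hpx⟩ := hx
      refine ⟨p.map (Subring.inclusion (this : O ≤ v.valuationSubring.toSubring)), hp.map _, ?_⟩
      rw [Polynomial.eval₂_map]
      exact hpx
    obtain ⟨w, hw⟩ := (IsIntegrallyClosed.isIntegral_iff (K := F)).mp hx2
    rw [← hw]; exact w.2
  have haI : ∀ j, IsIntegral O (a j) := fun j => isIntegral_algebraMap (R := O) (x := ⟨a j, ha j⟩)
  by_cases hcase : v (U m) = 1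
  · refine ⟨U m, hUL m, hisInt m (by omega), ?_, hcase⟩
    rcases m with _ | m
    · rw [hU0] at hcase; simp at hcase
    · have : U (m + 1) * y = U m - a m := by rw [hrec m (by omega)]; ring
      rw [this]
      exact (hisInt m (by omega)).sub (haI m)
  · have hlt : v (U m) < 1 := lt_of_le_of_ne (hvint _ (hisInt m (by omega))) hcase
    have hby : y * U (m + 1) = U m - a m := by rw [hrec m hm]; ring
    have hv1 : v (y * U (m + 1)) = 1 := by
      rw [hby, Valuation.map_sub_eq_of_lt_right, hvm]; rwa [hvm]
    refine ⟨U (m + 1), hUL _, hisInt _ (by omega), ?_, ?_⟩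
    · rw [mul_comm, hby]; exact (hisInt m (by omega)).sub (haI m)
    · rw [map_mul] at hv1
      refine le_antisymm (hvint _ (hisInt _ (by omega))) ?_
      rw [← hv1]
      exact mul_le_of_le_one_left' hvy

end PartA


section PartA2
open IntermediateField

/-- the derivation of integral elements of `K(z)` is bounded -/
lemma ptA_int_bound {k K F Γ₀ : Type*} [CommRing k] [Field K] [CharZero K] [Field F] [Algebra K F] [Algebra k F]
    [LinearOrderedCommGroupWithZero Γ₀] (v : Valuation F Γ₀) (Θ : Derivation k F F) (c : F)
    (h1 : ∀ a : K, a ≠ 0 → ∃ l : ℤ, v (algebraMap K F a) = v c ^ l)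
    (h2 : ∀ a : K, v (Θ (algebraMap K F a)) ≤ v (algebraMap K F a))
    (hc0 : c ≠ 0) (hc1 : v c < 1)
    (hΘalg : ∀ x : F, IsAlgebraic K x → IsAlgebraic K (Θ x))
    (z : F) (hz : IsIntegral (v.comap (algebraMap K F)).valuationSubring z) :
    ∃ M : ℕ, ∀ y ∈ K⟮z⟯, IsIntegral (v.comap (algebraMap K F)).valuationSubring y →
      v c ^ M * v (Θ y) ≤ 1 := by
  set R := (v.comap (algebraMap K F)).valuationSubring with hR
  have hzK : IsIntegral K z := hz.tower_top
  have hvc : v c ≠ 0 := (map_ne_zero v).mpr hc0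
  have hvcpos : 0 < v c := zero_lt_iff.mpr hvc
  have hzpow : ∀ l : ℤ, ∃ M : ℕ, v c ^ M * v c ^ l ≤ 1 := by
    intro l
    refine ⟨l.natAbs, ?_⟩
    rw [← zpow_natCast, ← zpow_add₀ hvc]
    have : 0 ≤ (l.natAbs : ℤ) + l := by omega
    lift (l.natAbs : ℤ) + l to ℕ using this with q
    rw [zpow_natCast]
    exact pow_le_one' hc1.le q
  have hbd : ∀ x : F, IsAlgebraic K x → ∃ M : ℕ, v c ^ M * v x ≤ 1 := by
    intro x hx
    by_cases hx0 : x = 0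
    · exact ⟨0, by simp [hx0]⟩
    obtain ⟨Q, hQ, hQx⟩ := hx
    obtain ⟨q, l, hq1, -, hq⟩ := ptA_slope v c h1 hc0 x hx0 Q hQ hQx
    obtain ⟨M, hM⟩ := hzpow l
    refine ⟨M, ?_⟩
    by_contra! hlt
    have h3 : 1 < (v c ^ M * v x) ^ q := one_lt_pow₀ hlt (by omega)
    rw [mul_pow, hq, ← pow_mul] at h3
    have h4 : v c ^ (M * q) ≤ v c ^ M := pow_le_pow_right_of_le_one' hc1.le (Nat.le_mul_of_pos_right M (by omega))
    have : v c ^ (M * q) * v c ^ l ≤ 1 := le_trans (mul_le_mul_left h4 _) hM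
    exact absurd h3 (not_lt.mpr this)
  have hvint : ∀ x, IsIntegral R x → v x ≤ 1 := by
    intro x hx
    let φ : R →+* v.valuationSubring :=
      { toFun := fun r => ⟨algebraMap K F r.1, r.2⟩
        map_one' := by ext; simp
        map_mul' := by intros; ext; simp
        map_zero' := by ext; simp
        map_add' := by intros; ext; simp }
    have hx2 : IsIntegral v.valuationSubring x := by
      obtain ⟨p, hp, hpx⟩ := hx
      refine ⟨p.map φ, hp.map _, ?_⟩
      rw [Polynomial.eval₂_map]
      exact hpx
    obtain ⟨w, hw⟩ := (IsIntegrallyClosed.isIntegral_iff (K := F)).mp hx2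
    rw [← hw]; exact w.2
  obtain ⟨M1, hM1⟩ := hbd (Θ z) (hΘalg z hzK.isAlgebraic)
  -- discriminant
  let B : PowerBasis K K⟮z⟯ := adjoin.powerBasis hzK
  have : Algebra.IsSeparable K K⟮z⟯ := by
    have : FiniteDimensional K K⟮z⟯ := adjoin.finiteDimensional hzK
    infer_instance
  have : FiniteDimensional K K⟮z⟯ := adjoin.finiteDimensional hzK
  have hBint : IsIntegral R B.gen := by
    have : algebraMap K⟮z⟯ F B.gen = z := by simp [B]
    rw [← isIntegral_algebraMap_iff (B := F) (algebraMap K⟮z⟯ F).injective, this]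
    exact hz
  have hΔ : Algebra.discr K B.basis ≠ 0 := Algebra.discr_not_zero_of_basis K B.basis
  set Δ : K := Algebra.discr K B.basis with hΔdef
  obtain ⟨lΔ, hlΔ⟩ := h1 Δ hΔ
  obtain ⟨M2, hM2⟩ := hzpow (-lΔ)
  have hinvΔ : v c ^ M2 * (v (algebraMap K F Δ))⁻¹ ≤ 1 := by
    rw [hlΔ, ← zpow_neg]; exact hM2
  -- the subalgebra
  have hadj : ∀ w ∈ Algebra.adjoin R ({B.gen} : Set K⟮z⟯), v (w : F) ≤ 1 ∧ v c ^ M1 * v (Θ (w : F)) ≤ 1 := by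
    intro w hw
    have hmulΘ : ∀ x y : F, v x ≤ 1 → v c ^ M1 * v (Θ x) ≤ 1 → v y ≤ 1 → v c ^ M1 * v (Θ y) ≤ 1 →
        v c ^ M1 * v (Θ (x * y)) ≤ 1 := by
      intro x y hx hx' hy hy'
      rw [Derivation.leibniz, ← map_pow, ← map_mul, mul_add]
      refine Valuation.map_add_le _ ?_ ?_
      · have := mul_le_one' hx hy'
        simp only [smul_eq_mul, map_mul, map_pow] at this ⊢
        rwa [mul_left_comm]
      · have := mul_le_one' hy hx'
        simp only [smul_eq_mul, map_mul, map_pow] at this ⊢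
        rwa [mul_left_comm]
    induction hw using Algebra.adjoin_induction with
    | mem x hx =>
      rw [Set.mem_singleton_iff] at hx
      subst hx
      have : ((B.gen : K⟮z⟯) : F) = z := by simp [B]
      rw [this]
      exact ⟨hvint z hz, hM1⟩
    | algebraMap r =>
      have hr : ((algebraMap R K⟮z⟯ r : K⟮z⟯) : F) = algebraMap K F r.1 := rfl
      rw [hr]
      have hr1 : v (algebraMap K F r.1) ≤ 1 := r.2
      exact ⟨hr1, mul_le_one' (pow_le_one' hc1.le _) ((h2 _).trans hr1)⟩
    | add x y _ _ hx hy =>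
      refine ⟨Valuation.map_add_le _ hx.1 hy.1, ?_⟩
      have e : Θ (((x + y : K⟮z⟯)) : F) = Θ x + Θ y := by rw [← map_add]; rfl
      rw [e, ← map_pow, ← map_mul, mul_add]
      refine Valuation.map_add_le _ ?_ ?_
      · simpa using hx.2
      · simpa using hy.2
    | mul x y _ _ hx hy =>
      refine ⟨?_, hmulΘ x y hx.1 hx.2 hy.1 hy.2⟩
      have : v ((x * y : K⟮z⟯) : F) = v (x : F) * v (y : F) := by rw [← map_mul]; rfl
      rw [this]; exact mul_le_one' hx.1 hy.1
  refine ⟨M1 + M2, ?_⟩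
  intro y hy hyint
  let y' : K⟮z⟯ := ⟨y, hy⟩
  have hy'int : IsIntegral R y' := by
    rw [← isIntegral_algebraMap_iff (B := F) (algebraMap K⟮z⟯ F).injective]
    exact hyint
  have hmem := Algebra.discr_mul_isIntegral_mem_adjoin (R := R) (K := K) (B := B) hBint hy'int
  obtain ⟨-, hw⟩ := hadj _ hmem
  have e1 : ((Algebra.discr K B.basis • y' : K⟮z⟯) : F) = algebraMap K F Δ * y := by
    rw [IntermediateField.coe_smul, Algebra.smul_def]
  rw [e1, Derivation.leibniz] at hw
  have hΔF : algebraMap K F Δ ≠ 0 := by simpa using hΔ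
  have hvΔ : v (algebraMap K F Δ) ≠ 0 := (map_ne_zero v).mpr hΔF
  have e2 : Θ y = (algebraMap K F Δ)⁻¹ * (algebraMap K F Δ • Θ y + y • Θ (algebraMap K F Δ))
      - (algebraMap K F Δ)⁻¹ * (y * Θ (algebraMap K F Δ)) := by
    simp only [smul_eq_mul]
    field_simp
    ring
  rw [e2, ← map_pow, ← map_mul, mul_sub]
  refine v.map_sub_le ?_ ?_
  · have := mul_le_one' hw hinvΔ
    rw [map_mul, map_mul, map_pow, map_inv₀, pow_add]
    calc _ = _ := by ac_rfl
      _ ≤ 1 := this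
  · rw [map_mul, map_mul, map_pow, map_inv₀, map_mul]
    have h3 : (v (algebraMap K F Δ))⁻¹ * v (Θ (algebraMap K F Δ)) ≤ 1 := by
      rw [inv_mul_le_iff₀ (zero_lt_iff.mpr hvΔ), mul_one]; exact h2 _
    have h4 := mul_le_one' (pow_le_one' hc1.le (M1 + M2)) (mul_le_one' (hvint y hyint) h3)
    calc _ = _ := by ac_rfl
      _ ≤ 1 := h4

end PartA2


section PartA3
open IntermediateField

lemma ptA_deriv_alg {k K F : Type*} [CommRing k] [Field K] [CharZero K] [Field F] [Algebra K F] [Algebra k F]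
    (Θ : Derivation k F F) (hK : ∀ a : K, ∃ b : K, Θ (algebraMap K F a) = algebraMap K F b)
    (x : F) (hx : IsAlgebraic K x) : IsAlgebraic K (Θ x) := by
  choose b hb using hK
  have hxi : IsIntegral K x := hx.isIntegral
  set P := minpoly K x with hP
  have hPx : Polynomial.aeval x P = 0 := minpoly.aeval K x
  have hsep : P.Separable := (minpoly.irreducible hxi).separable
  have hne : Polynomial.aeval x P.derivative ≠ 0 := hsep.aeval_derivative_ne_zero hPx
  have hsum : ∑ i ∈ Finset.range (P.natDegree + 1), algebraMap K F (P.coeff i) * x ^ i = 0 := by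
    rw [← hPx, Polynomial.aeval_eq_sum_range]
    simp [Algebra.smul_def]
  have hd : Polynomial.aeval x P.derivative =
      ∑ i ∈ Finset.range (P.natDegree + 1), algebraMap K F (P.coeff i) * (i * x ^ (i - 1)) := by
    conv_lhs => rw [P.as_sum_range]
    simp [Polynomial.derivative_sum, Polynomial.derivative_monomial, Polynomial.aeval_monomial, mul_assoc]
  have hΘ : (∑ i ∈ Finset.range (P.natDegree + 1), algebraMap K F (b (P.coeff i)) * x ^ i) +
      Polynomial.aeval x P.derivative * Θ x = 0 := by
    have h0 := congrArg Θ hsum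
    rw [map_sum, map_zero] at h0
    rw [hd, Finset.sum_mul, ← Finset.sum_add_distrib, ← h0]
    refine Finset.sum_congr rfl fun i _ => ?_
    rw [Derivation.leibniz, Derivation.leibniz_pow, hb]
    simp only [smul_eq_mul, nsmul_eq_mul]
    ring
  have e : Θ x = -(∑ i ∈ Finset.range (P.natDegree + 1), algebraMap K F (b (P.coeff i)) * x ^ i) *
      (Polynomial.aeval x P.derivative)⁻¹ := by
    rw [eq_mul_inv_iff_mul_eq₀ hne]
    linear_combination hΘ
  have hmem : Θ x ∈ K⟮x⟯ := by
    have hxm : x ∈ K⟮x⟯ := mem_adjoin_simple_self K x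
    rw [e]
    refine mul_mem (neg_mem (sum_mem fun i _ => mul_mem (_root_.algebraMap_mem _ _) (pow_mem hxm _))) (inv_mem ?_)
    rw [hd]
    exact sum_mem fun i _ => mul_mem (_root_.algebraMap_mem _ _) (mul_mem (_root_.natCast_mem _ _) (pow_mem hxm _))
  have : FiniteDimensional K K⟮x⟯ := adjoin.finiteDimensional hxi
  have h := Algebra.IsAlgebraic.isAlgebraic (R := K) (⟨Θ x, hmem⟩ : K⟮x⟯)
  exact h.algebraMap (A := F)

/-- Main valuation estimate: an algebraic `v`-integral element has small log-derivative. -/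
theorem ptA_main {k K F Γ₀ : Type*} [CommRing k] [Field K] [CharZero K] [Field F] [Algebra K F] [Algebra k F]
    [LinearOrderedCommGroupWithZero Γ₀] (v : Valuation F Γ₀) (Θ : Derivation k F F) (c : F) (c' : K)
    (hcc : algebraMap K F c' = c)
    (h0 : ∀ m : ℕ, m ≠ 0 → v (m : F) = 1)
    (h1 : ∀ a : K, a ≠ 0 → ∃ l : ℤ, v (algebraMap K F a) = v c ^ l)
    (h2 : ∀ a : K, v (Θ (algebraMap K F a)) ≤ v (algebraMap K F a))
    (h3 : ∀ y : F, v y ≤ 1 → ∃ r : K, Θ (algebraMap K F r) = 0 ∧ v (y - algebraMap K F r) < 1)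
    (hK : ∀ a : K, ∃ b : K, Θ (algebraMap K F a) = algebraMap K F b)
    (hc0 : c ≠ 0) (hc1 : v c < 1) (hΘc : Θ c = c)
    (z : F) (hzalg : IsAlgebraic K z) (hvz : v z ≤ 1) :
    ∃ d : ℕ, 1 ≤ d ∧ v (Θ z) ^ d ≤ v c := by
  classical
  set R := (v.comap (algebraMap K F)).valuationSubring with hR
  have hvc : v c ≠ 0 := (map_ne_zero v).mpr hc0
  have hvcpos : 0 < v c := zero_lt_iff.mpr hvc
  have hΘalg := ptA_deriv_alg Θ hK
  -- integral generator
  have hzR : IsAlgebraic R z :=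
    (IsFractionRing.isAlgebraic_iff R K F).mpr hzalg
  obtain ⟨b, hb0, hbz⟩ := hzR.exists_integral_multiple
  set z' : F := b • z with hz'
  have hz'e : z' = algebraMap K F b.1 * z := by
    rw [hz']; exact (Algebra.smul_def b z)
  have hb0' : (b : K) ≠ 0 := fun h => hb0 (Subtype.ext h)
  have hbF : algebraMap K F b.1 ≠ 0 := by simpa using hb0'
  obtain ⟨M, hM⟩ := ptA_int_bound v Θ c h1 h2 hc0 hc1 hΘalg z' hbz
  set E := K⟮z'⟯ with hE
  have hz'K : IsIntegral K z' := IsIntegral.tower_top (R := R) hbz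
  have hfd : FiniteDimensional K E := adjoin.finiteDimensional hz'K
  have hzE : z ∈ E := by
    have : z = (algebraMap K F b.1)⁻¹ * z' := by rw [hz'e]; field_simp
    rw [this]
    exact mul_mem (inv_mem (_root_.algebraMap_mem _ _)) (mem_adjoin_simple_self K z')
  set d := Module.finrank K E with hd
  have hdpos : 1 ≤ d := Module.finrank_pos
  have hcE : c ∈ E := by rw [← hcc]; exact _root_.algebraMap_mem _ _
  -- slopes
  have hslope : ∀ y ∈ E, y ≠ 0 → ∃ (q : ℕ) (l : ℤ), 1 ≤ q ∧ q ≤ d ∧ v y ^ q = v c ^ l := by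
    intro y hy hy0
    have hyi : IsIntegral K (⟨y, hy⟩ : E) := IsIntegral.of_finite K _
    have hP : Polynomial.aeval y (minpoly K (⟨y, hy⟩ : E)) = 0 := by
      have := congrArg (algebraMap E F) (minpoly.aeval K (⟨y, hy⟩ : E))
      rwa [map_zero, ← Polynomial.aeval_algebraMap_apply] at this
    obtain ⟨q, l, hq, hqd, h⟩ := ptA_slope v c h1 hc0 y hy0 _ (minpoly.ne_zero hyi) hP
    exact ⟨q, l, hq, hqd.trans (minpoly.natDegree_le _), h⟩
  -- bound for v-integral elements
  let O : Subring F := (R.toSubring).map (algebraMap K F)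
  have hO : ∀ x ∈ O, v x ≤ 1 := by
    rintro x ⟨r, hr, rfl⟩; exact hr
  have hOint : ∀ x : F, IsIntegral O x → IsIntegral R x := by
    rintro x ⟨p, hp, hpx⟩
    have hinj : Function.Injective (algebraMap K F) := (algebraMap K F).injective
    let ψ : O →+* R :=
      { toFun := fun o => ⟨o.2.choose, o.2.choose_spec.1⟩
        map_one' := by
          ext; apply hinj; exact ((1 : O).2.choose_spec.2).trans (map_one _).symm
        map_mul' := by
          intro x y; ext; apply hinj
          simp [(x * y : O).2.choose_spec.2, x.2.choose_spec.2, y.2.choose_spec.2]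
        map_zero' := by
          ext; apply hinj; exact ((0 : O).2.choose_spec.2).trans (map_zero _).symm
        map_add' := by
          intro x y; ext; apply hinj
          simp [(x + y : O).2.choose_spec.2, x.2.choose_spec.2, y.2.choose_spec.2] }
    refine ⟨p.map ψ, hp.map _, ?_⟩
    rw [Polynomial.eval₂_map]
    have : (algebraMap R F).comp ψ = algebraMap O F := by
      ext o; exact o.2.choose_spec.2
    rw [this]; exact hpx
  have hbound : ∀ y ∈ E, v y ≤ 1 → v c ^ M * v (Θ y) ≤ 1 := by
    intro y hy hvy
    have hyi : IsIntegral K (⟨y, hy⟩ : E) := IsIntegral.of_finite K _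
    set P := minpoly K (⟨y, hy⟩ : E) with hPdef
    have hP0 : P ≠ 0 := minpoly.ne_zero hyi
    have hP : Polynomial.aeval y P = 0 := by
      have := congrArg (algebraMap E F) (minpoly.aeval K (⟨y, hy⟩ : E))
      rwa [map_zero, ← Polynomial.aeval_algebraMap_apply] at this
    obtain ⟨m, hm, hmax⟩ := Finset.exists_max_image P.support (fun i => v (algebraMap K F (P.coeff i)))
      (Polynomial.support_nonempty.mpr hP0)
    have hpm : P.coeff m ≠ 0 := Polynomial.mem_support_iff.mp hm
    have hvpm : v (algebraMap K F (P.coeff m)) ≠ 0 := by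
      rw [map_ne_zero]; simpa using hpm
    let a : ℕ → F := fun i => algebraMap K F (P.coeff i / P.coeff m)
    have haO : ∀ i, a i ∈ O := by
      intro i
      refine ⟨P.coeff i / P.coeff m, ?_, rfl⟩
      change v (algebraMap K F (P.coeff i / P.coeff m)) ≤ 1
      rw [map_div₀, map_div₀]
      by_cases hi : i ∈ P.support
      · exact div_le_one_of_le₀ (hmax i hi) zero_le'
      · simp [Polynomial.notMem_support_iff.mp hi]
    have hsum : ∑ i ∈ Finset.range (P.natDegree + 1), a i * y ^ i = 0 := by
      have h5 : ∑ i ∈ Finset.range (P.natDegree + 1), algebraMap K F (P.coeff i) * y ^ i = 0 := by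
        rw [← hP, Polynomial.aeval_eq_sum_range]
        simp [Algebra.smul_def]
      have : ∑ i ∈ Finset.range (P.natDegree + 1), a i * y ^ i =
          (algebraMap K F (P.coeff m))⁻¹ * ∑ i ∈ Finset.range (P.natDegree + 1), algebraMap K F (P.coeff i) * y ^ i := by
        rw [Finset.mul_sum]
        refine Finset.sum_congr rfl fun i _ => ?_
        simp only [a, map_div₀]; ring
      rw [this, h5, mul_zero]
    obtain ⟨s, hsE, hs, hsy, hvs⟩ := ptA_quot v O hO a haO P.natDegree y hsum hvy m
      (Polynomial.le_natDegree_of_mem_supp m hm) (by simp [a, hpm]) E.toSubring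
      (fun i => _root_.algebraMap_mem E _) hy
    have hsE' : s ∈ E := hsE
    have b1 := hM s hsE' (hOint s hs)
    have b2 := hM (s * y) (mul_mem hsE' hy) (hOint _ hsy)
    have hs0 : s ≠ 0 := by rintro rfl; simp at hvs
    have e : v (Θ y) = v (Θ (s * y) - y * Θ s) := by
      have : Θ (s * y) - y * Θ s = s * Θ y := by
        rw [Derivation.leibniz]; simp only [smul_eq_mul]; ring
      rw [this, map_mul, hvs, one_mul]
    rw [e, ← map_pow, ← map_mul, mul_sub]
    refine v.map_sub_le ?_ ?_
    · simpa using b2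
    · rw [map_mul, map_mul, map_pow, mul_left_comm]
      exact mul_le_one' hvy b1
  -- reduction to units
  have hunit : ∀ y ∈ E, y ≠ 0 → ∃ u ∈ E, v u = 1 ∧ v (Θ y / y) ≤ max (v (Θ u)) 1 := by
    intro y hy hy0
    obtain ⟨q, l, hq1, -, hq⟩ := hslope y hy hy0
    have hvy : v y ≠ 0 := (map_ne_zero v).mpr hy0
    have hlogc : ∀ l : ℤ, Θ (c ^ l) = l * c ^ l := by
      have hnat : ∀ m : ℕ, Θ (c ^ m) = m * c ^ m := by
        intro m
        rw [Derivation.leibniz_pow, hΘc]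
        rcases m with _ | m
        · simp
        · simp only [Nat.add_sub_cancel, smul_eq_mul, nsmul_eq_mul]; ring
      intro l
      obtain ⟨m, rfl | rfl⟩ := l.eq_nat_or_neg
      · simpa using hnat m
      · rw [zpow_neg, zpow_natCast, Derivation.leibniz_inv, hnat]
        simp only [smul_eq_mul]
        push_cast
        field_simp
    refine ⟨y ^ q / c ^ l, div_mem (pow_mem hy _) (zpow_mem hcE _), ?_, ?_⟩
    · rw [map_div₀, map_pow, map_zpow₀, hq, div_self (zpow_ne_zero _ hvc)]
    · set u := y ^ q / c ^ l with hu
      have hvu : v u = 1 := by rw [hu, map_div₀, map_pow, map_zpow₀, hq, div_self (zpow_ne_zero _ hvc)]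
      have hcl : c ^ l ≠ 0 := zpow_ne_zero _ hc0
      have hyq : y ^ q = u * c ^ l := by rw [hu]; field_simp
      have hu0 : u ≠ 0 := by intro h; rw [h] at hvu; simp at hvu
      have e1 : (q : F) * (Θ y / y) = Θ u / u + l := by
        have h5 := congrArg Θ hyq
        rw [Derivation.leibniz_pow, Derivation.leibniz, hlogc] at h5
        simp only [smul_eq_mul, nsmul_eq_mul] at h5
        have h6 : y ^ (q - 1) = y ^ q / y := by
          rw [eq_div_iff hy0, ← pow_succ]; congr 1; omega
        rw [h6, hyq] at h5
        field_simp at h5 ⊢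
        linear_combination h5
      have e2 : v (Θ y / y) = v (Θ u / u + l) := by
        rw [← e1, map_mul, h0 q (by omega), one_mul]
      rw [e2]
      refine (v.map_add _ _).trans (max_le_max ?_ ?_)
      · rw [map_div₀, hvu, div_one]
      · obtain ⟨m, rfl | rfl⟩ := l.eq_nat_or_neg
        · rcases eq_or_ne m 0 with rfl | hm
          · simp
          · simpa using (h0 m hm).le
        · rcases eq_or_ne m 0 with rfl | hm
          · simp
          · simpa using (h0 m hm).le
  have hsmall : ∀ ε ∈ E, v ε < 1 → v ε ^ d ≤ v c := by
    intro ε hε hlt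
    by_cases hε0 : ε = 0
    · rw [hε0, map_zero, zero_pow (by omega)]; exact zero_le'
    obtain ⟨q, l, hq1, hqd, hq⟩ := hslope ε hε hε0
    have hl : 1 ≤ l := by
      by_contra! hl
      have h6 : v ε ^ q < 1 := pow_lt_one₀ zero_le' hlt (by omega)
      rw [hq] at h6
      have : 1 ≤ v c ^ l := by
        rw [← neg_neg l, zpow_neg]
        have : 0 ≤ -l := by omega
        lift -l to ℕ using this with m
        rw [zpow_natCast]
        exact (one_le_inv₀ (pow_pos hvcpos _)).mpr (pow_le_one' hc1.le _)
      exact absurd h6 (not_lt.mpr this)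
    calc v ε ^ d ≤ v ε ^ q := pow_le_pow_right_of_le_one' hlt.le hqd
      _ = v c ^ l := hq
      _ ≤ v c := by
        lift l to ℕ using (by omega) with m
        rw [zpow_natCast]
        exact (pow_le_pow_right_of_le_one' hc1.le (by omega : 1 ≤ m)).trans (pow_one _).le
  -- residue decomposition
  have hres : ∀ u ∈ E, v u ≤ 1 → ∃ ε ∈ E, v ε < 1 ∧ Θ u = Θ ε := by
    intro u hu hvu
    obtain ⟨r, hr0, hr⟩ := h3 u hvu
    refine ⟨u - algebraMap K F r, sub_mem hu (_root_.algebraMap_mem _ _), hr, ?_⟩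
    rw [map_sub, hr0, sub_zero]
  -- descent
  have hS : ∀ s : ℕ, (∀ y ∈ E, y ≠ 0 → v (Θ y / y) ^ d * v c ^ s ≤ 1) →
      ∀ y ∈ E, y ≠ 0 → v (Θ y / y) ^ d * v c ^ 0 ≤ 1 := by
    intro s
    induction s with
    | zero => exact fun h => h
    | succ s ih =>
      intro h
      apply ih
      intro y hy hy0
      obtain ⟨u, huE, hvu, hle⟩ := hunit y hy hy0
      have hmain : v (Θ u) ^ d * v c ^ s ≤ 1 := by
        obtain ⟨ε, hεE, hvε, hΘ⟩ := hres u huE hvu.le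
        rw [hΘ]
        by_cases hε0 : ε = 0
        · rw [hε0, map_zero, map_zero, zero_pow (by omega), zero_mul]; exact zero_le'
        have hvε0 : v ε ≠ 0 := (map_ne_zero v).mpr hε0
        have h5 := h ε hεE hε0
        have h6 := hsmall ε hεE hvε
        calc v (Θ ε) ^ d * v c ^ s = (v (Θ ε / ε) ^ d * v c ^ (s + 1)) * (v ε ^ d * (v c)⁻¹) := by
              rw [map_div₀, div_pow, pow_succ]
              field_simp
          _ ≤ 1 := mul_le_one' h5 (by rw [mul_inv_le_iff₀ hvcpos, one_mul]; exact h6)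
      rcases le_max_iff.mp hle with h7 | h7
      · exact le_trans (mul_le_mul_left (pow_le_pow_left₀ zero_le' h7 d) _) hmain
      · exact mul_le_one' (pow_le_one' h7 d) (pow_le_one' hc1.le s)
  have hfin : ∀ y ∈ E, y ≠ 0 → v (Θ y / y) ^ d * v c ^ 0 ≤ 1 := by
    apply hS (M * d)
    intro y hy hy0
    obtain ⟨u, huE, hvu, hle⟩ := hunit y hy hy0
    have h5 := hbound u huE hvu.le
    have h6 : v (Θ y / y) * v c ^ M ≤ 1 := by
      rcases le_max_iff.mp hle with h7 | h7
      · rw [mul_comm]; exact le_trans (mul_le_mul_right h7 _) h5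
      · exact mul_le_one' h7 (pow_le_one' hc1.le M)
    rw [pow_mul, ← mul_pow]
    exact pow_le_one' h6 d
  obtain ⟨ε, hεE, hvε, hΘ⟩ := hres z hzE hvz
  refine ⟨d, hdpos, ?_⟩
  rw [hΘ]
  by_cases hε0 : ε = 0
  · rw [hε0, map_zero, map_zero, zero_pow (by omega)]; exact zero_le'
  have hvε0 : v ε ≠ 0 := (map_ne_zero v).mpr hε0
  have h5 := hfin ε hεE hε0
  rw [pow_zero, mul_one] at h5
  calc v (Θ ε) ^ d = v (Θ ε / ε) ^ d * v ε ^ d := by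
        rw [map_div₀, div_pow]; field_simp
    _ ≤ 1 * v ε ^ d := mul_le_mul_left h5 _
    _ ≤ v c := by rw [one_mul]; exact hsmall ε hεE hvε

end PartA3


theorem ptB_lift {A F T : Type*} [CommRing A] [CommRing F] [CommRing T] [Algebra A F]
    [Algebra.FormallySmooth A F] (φ : A →+* T) (g : T →+* F) (hg : Function.Surjective g)
    (hker : IsNilpotent (RingHom.ker g)) (hc : g.comp φ = algebraMap A F) :
    ∃ ψ : F →+* T, (∀ x, g (ψ x) = x) ∧ ∀ a, ψ (algebraMap A F a) = φ a := by
  let _ : Algebra A T := φ.toAlgebra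
  let g' : T →ₐ[A] F := { g with commutes' := fun a => RingHom.congr_fun hc a }
  let ψ := Algebra.FormallySmooth.liftOfSurjective (AlgHom.id A F) g' hg hker
  refine ⟨ψ.toRingHom, fun x => ?_, fun a => ?_⟩
  · exact Algebra.FormallySmooth.liftOfSurjective_apply (AlgHom.id A F) g' hg hker x
  · exact ψ.commutes a

/-- Over a field of characteristic zero a transcendental `c` has a derivation with `Θ c = c`. -/
theorem ptB_deriv {k F : Type*} [Field k] [CharZero k] [Field F] [Algebra k F] (c : F)
    (hc : Transcendental k c) : ∃ Θ : Derivation k F F, Θ c = c := by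
  classical
  have hci : AlgebraicIndepOn k id ({c} : Set F) := by
    have := (algebraicIndependent_unique_type_iff (R := k) (x := fun i : ({c} : Set F) => (i : F))).2 hc
    exact this
  obtain ⟨B, hcB, hB⟩ := exists_isTranscendenceBasis_superset hci
  have hcB' : c ∈ B := hcB rfl
  have hBi : AlgebraicIndependent k (fun b : B => (b : F)) := hB.1
  set A := Algebra.adjoin k (Set.range (fun b : B => (b : F))) with hA
  have halg : Algebra.IsAlgebraic A F := hB.isAlgebraic
  let _ : Algebra (FractionRing A) F := FractionRing.liftAlgebra A F
  have : IsScalarTower A (FractionRing A) F := FractionRing.isScalarTower_liftAlgebra A F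
  have : Algebra.IsAlgebraic (FractionRing A) F := 
    (IsFractionRing.comap_isAlgebraic_iff (A := A) (K := FractionRing A) (C := F)).1 halg
  have : CharZero (FractionRing A) := by
    have : CharZero A := charZero_of_injective_algebraMap (algebraMap k A).injective
    exact charZero_of_injective_algebraMap (IsFractionRing.injective A (FractionRing A))
  have : Algebra.FormallySmooth A (FractionRing A) := .of_isLocalization (nonZeroDivisors _)
  have : Algebra.FormallyEtale (FractionRing A) F := Algebra.FormallyEtale.of_isSeparable _ F
  have : Algebra.FormallySmooth A F := .comp _ (FractionRing A) _
  let φ0 : MvPolynomial B k →ₐ[k] TrivSqZeroExt F F :=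
    MvPolynomial.aeval (fun b => TrivSqZeroExt.inl (b : F) + TrivSqZeroExt.inr (if (b : F) = c then c else 0))
  let φ : A →ₐ[k] TrivSqZeroExt F F := φ0.comp hBi.aevalEquiv.symm.toAlgHom
  let g : TrivSqZeroExt F F →ₐ[k] F := TrivSqZeroExt.fstHom k F F
  have hcomp : ∀ a, g (φ a) = algebraMap A F a := by
    have h1 : g.comp φ0 = (A.val).comp hBi.aevalEquiv.toAlgHom := by
      ext b
      simp [φ0, g]
      split_ifs <;> simp
    intro a
    have := AlgHom.congr_fun h1 (hBi.aevalEquiv.symm a)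
    simpa [φ] using this
  obtain ⟨ψ, h1, h2⟩ := ptB_lift (A := A) (F := F) φ.toRingHom g.toRingHom
    (fun x => ⟨TrivSqZeroExt.inl x, by simp [g]⟩)
    ⟨2, TrivSqZeroExt.kerIdeal_sq F F⟩ (RingHom.ext hcomp)
  have hfst : ∀ x, (ψ x).fst = x := h1
  have hk : ∀ r : k, ψ (algebraMap k F r) = algebraMap k _ r := by
    intro r
    have := h2 (algebraMap k A r)
    rw [← IsScalarTower.algebraMap_apply] at this
    rw [this]; exact φ.commutes r
  let D : F →ₗ[k] F :=
    { toFun := fun x => (ψ x).snd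
      map_add' := by intro x y; simp
      map_smul' := by
        intro r x
        rw [Algebra.smul_def, map_mul, hk]
        simp [TrivSqZeroExt.snd_mul, Algebra.smul_def, TrivSqZeroExt.algebraMap_eq_inl'] }
  refine ⟨Derivation.mk' D ?_, ?_⟩
  · intro x y
    simp [D, hfst, mul_comm]
  · change (ψ c).snd = c
    have h3 : c ∈ A := Algebra.subset_adjoin ⟨⟨c, hcB'⟩, rfl⟩
    have := h2 ⟨c, h3⟩
    have h4 : hBi.aevalEquiv.symm ⟨c, h3⟩ = MvPolynomial.X ⟨c, hcB'⟩ := by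
      rw [AlgEquiv.symm_apply_eq]
      ext
      simp
    change ψ c = φ0 (hBi.aevalEquiv.symm ⟨c, h3⟩) at this
    rw [this, h4]
    simp [φ0]


section
variable {k F Γ₀ : Type*} [Field k] [Field F] [Algebra k F]
    [LinearOrderedCommGroupWithZero Γ₀] (v : Valuation F Γ₀)

theorem ptB_coe_le (hv : ∀ r : k, r ≠ 0 → v (algebraMap k F r) = 1) (r : k) :
    v (algebraMap k F r) ≤ 1 := by
  by_cases h : r = 0
  · simp [h]
  · exact (hv r h).le

/-- valuation of a polynomial in `c` with unit constant term -/
theorem ptB_val_aux (hv : ∀ r : k, r ≠ 0 → v (algebraMap k F r) = 1) (c : F) (hc1 : v c < 1)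
    (P : Polynomial k) : v (Polynomial.aeval c P) ≤ 1 := by
  rw [Polynomial.aeval_eq_sum_range]
  refine v.map_sum_le fun i _ => ?_
  rw [Algebra.smul_def, map_mul, map_pow]
  exact mul_le_one' (ptB_coe_le v hv _) (pow_le_one' hc1.le _)

theorem ptB_val_poly (hv : ∀ r : k, r ≠ 0 → v (algebraMap k F r) = 1) (c : F) (hc1 : v c < 1)
    (P : Polynomial k) (hP : P ≠ 0) : v (Polynomial.aeval c P) = v c ^ P.natTrailingDegree := by
  obtain ⟨Q, hQ⟩ : Polynomial.X ^ P.natTrailingDegree ∣ P := by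
    rw [Polynomial.X_pow_dvd_iff]
    exact fun d hd => Polynomial.coeff_eq_zero_of_lt_natTrailingDegree hd
  set m := P.natTrailingDegree with hm
  have hQ0 : Q.coeff 0 ≠ 0 := by
    have h1 : P.coeff m ≠ 0 := by
      have := Polynomial.trailingCoeff_nonzero_iff_nonzero.2 hP
      exact this
    rw [hQ, Polynomial.coeff_X_pow_mul', if_pos le_rfl, Nat.sub_self] at h1
    exact h1
  have hvQ : v (Polynomial.aeval c Q) = 1 := by
    have h2 : Q = Polynomial.X * Q.divX + Polynomial.C (Q.coeff 0) := (Polynomial.X_mul_divX_add Q).symm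
    have h3 : v (c * Polynomial.aeval c Q.divX) < 1 := by
      rw [map_mul]
      exact lt_of_le_of_lt (mul_le_of_le_one_right' (ptB_val_aux v hv c hc1 _)) hc1
    have h4 : v (algebraMap k F (Q.coeff 0)) = 1 := hv _ hQ0
    rw [h2]
    simp only [map_add, map_mul, Polynomial.aeval_X, Polynomial.aeval_C]
    rw [v.map_add_eq_of_lt_right (by rw [h4]; exact h3), h4]
  rw [hQ, map_mul, map_mul, hvQ, mul_one]
  simp

theorem ptB_transcendental (hv : ∀ r : k, r ≠ 0 → v (algebraMap k F r) = 1) (c : F) (hc1 : v c < 1)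
    (hc0 : c ≠ 0) : Transcendental k c := by
  rintro ⟨P, hP, h⟩
  have := ptB_val_poly v hv c hc1 P hP
  rw [h, map_zero] at this
  exact pow_ne_zero _ ((map_ne_zero v).2 hc0) this.symm

theorem ptB_theta_poly (hv : ∀ r : k, r ≠ 0 → v (algebraMap k F r) = 1) (c : F) (hc1 : v c < 1)
    (Θ : Derivation k F F) (hΘ : Θ c = c) (P : Polynomial k) :
    Θ (Polynomial.aeval c P) = Polynomial.aeval c (Polynomial.X * Polynomial.derivative P) ∧
    v (Θ (Polynomial.aeval c P)) ≤ v (Polynomial.aeval c P) := by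
  have h1 : Θ (Polynomial.aeval c P) = Polynomial.aeval c (Polynomial.X * Polynomial.derivative P) := by
    have := Θ.map_aeval P c
    rw [this, hΘ]
    simp [mul_comm]
  refine ⟨h1, ?_⟩
  rw [h1]
  by_cases hP : P = 0
  · simp [hP]
  by_cases hQ : (Polynomial.X * Polynomial.derivative P) = 0
  · rw [hQ]; simp
  rw [ptB_val_poly v hv c hc1 P hP, ptB_val_poly v hv c hc1 _ hQ]
  apply pow_le_pow_right_of_le_one' hc1.le
  apply Polynomial.le_natTrailingDegree hQ
  intro i hi
  rcases i with _ | i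
  · simp
  · rw [Polynomial.coeff_X_mul, Polynomial.coeff_derivative,
      Polynomial.coeff_eq_zero_of_lt_natTrailingDegree hi, zero_mul]

open IntermediateField in
theorem ptB_main [CharZero k] (hv : ∀ r : k, r ≠ 0 → v (algebraMap k F r) = 1)
    (hres : ∀ y : F, v y ≤ 1 → ∃ r : k, v (y - algebraMap k F r) < 1)
    (c : F) (hc0 : c ≠ 0) (hc1 : v c < 1)
    (Θ : Derivation k F F) (hΘ : Θ c = c) (z : F) (hz : IsAlgebraic k⟮c⟯ z) (hvz : v z ≤ 1) :
    ∃ d : ℕ, 1 ≤ d ∧ v (Θ z) ^ d ≤ v c := by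
  have hrep : ∀ a : k⟮c⟯, ∃ P Q : Polynomial k, (a : F) = Polynomial.aeval c P / Polynomial.aeval c Q := by
    intro a
    exact (IntermediateField.mem_adjoin_simple_iff k (a : F)).1 a.2
  have hvc : v c ≠ 0 := (map_ne_zero v).2 hc0
  have hdiv : ∀ x y : F, Θ (x / y) = Θ x / y - (x / y) * (Θ y / y) := by
    intro x y
    by_cases hy : y = 0
    · simp [hy]
    rw [Θ.leibniz_div]
    simp
    field_simp
  refine ptA_main (K := k⟮c⟯) v Θ c ⟨c, mem_adjoin_simple_self k c⟩ rfl ?_ ?_ ?_ ?_ ?_ hc0 hc1 hΘ z hz hvz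
  · intro m hm
    have := hv (m : k) (by exact_mod_cast hm)
    simpa using this
  · intro a ha
    obtain ⟨P, Q, h⟩ := hrep a
    have ha' : (a : F) ≠ 0 := by simpa using ha
    have hP : P ≠ 0 := by rintro rfl; simp at h; exact ha h
    have hQ : Q ≠ 0 := by rintro rfl; simp at h; exact ha h
    refine ⟨(P.natTrailingDegree : ℤ) - Q.natTrailingDegree, ?_⟩
    change v (a : F) = _
    rw [h, map_div₀, ptB_val_poly v hv c hc1 P hP, ptB_val_poly v hv c hc1 Q hQ, zpow_sub₀ hvc]
    simp
  · intro a
    obtain ⟨P, Q, h⟩ := hrep a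
    change v (Θ (a : F)) ≤ v (a : F)
    rw [h, hdiv]
    by_cases hQ : Q = 0
    · simp [hQ]
    have hQ' : Polynomial.aeval c Q ≠ 0 := by
      rw [← map_ne_zero v, ptB_val_poly v hv c hc1 Q hQ]
      exact pow_ne_zero _ hvc
    have hQv : 0 < v (Polynomial.aeval c Q) := zero_lt_iff.2 ((map_ne_zero v).2 hQ')
    refine v.map_sub_le ?_ ?_
    · rw [map_div₀, map_div₀]
      exact div_le_div_of_nonneg_right (ptB_theta_poly v hv c hc1 Θ hΘ P).2 zero_le
    · rw [map_mul]
      refine mul_le_of_le_one_right' ?_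
      rw [map_div₀, div_le_one₀ hQv]
      exact (ptB_theta_poly v hv c hc1 Θ hΘ Q).2
  · intro y hy
    obtain ⟨r, hr⟩ := hres y hy
    refine ⟨algebraMap k _ r, ?_, ?_⟩
    · rw [← IsScalarTower.algebraMap_apply]; exact Θ.map_algebraMap r
    · rw [← IsScalarTower.algebraMap_apply]; exact hr
  · intro a
    obtain ⟨P, Q, h⟩ := hrep a
    have hpm : ∀ P : Polynomial k, Polynomial.aeval c P ∈ k⟮c⟯ := fun P =>
      (Polynomial.aeval_mem_adjoin_singleton k c (p := P)) |> fun h => algebra_adjoin_le_adjoin k _ h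
    refine ⟨⟨Θ (a : F), ?_⟩, rfl⟩
    rw [h, hdiv, (ptB_theta_poly v hv c hc1 Θ hΘ P).1, (ptB_theta_poly v hv c hc1 Θ hΘ Q).1]
    exact sub_mem (div_mem (hpm _) (hpm _)) (mul_mem (div_mem (hpm _) (hpm _)) (div_mem (hpm _) (hpm _)))
end


theorem ptB_trdeg {k F ι : Type*} [Field k] [Field F] [Algebra k F] [Fintype ι] (w : ι → F)
    (hw : AlgebraicIndependent k w) (T : Set F) (hT : T.encard ≤ Fintype.card ι)
    (hwT : ∀ i, IsAlgebraic (Algebra.adjoin k T) (w i)) (t : F) (ht : t ∈ T) :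
    IsAlgebraic (Algebra.adjoin k (Set.range w)) t := by
  classical
  let M := AlgebraicIndependent.matroid k F
  have hI : M.Indep (Set.range w) := AlgebraicIndependent.matroid_indep_iff.2 hw.to_subtype_range
  have hcard : (Set.range w).encard = Fintype.card ι := by
    rw [← Set.image_univ, hw.injective.encard_image]; simp
  have hsub : Set.range w ⊆ M.closure T := by
    rintro _ ⟨i, rfl⟩
    rw [AlgebraicIndependent.matroid_closure_eq]
    exact hwT i
  have hb : M.IsBasis (Set.range w) (M.closure T) := by
    obtain ⟨J, hJ, hIJ⟩ := Matroid.Indep.subset_isBasis_of_subset hI hsub (by intro x _; trivial)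
    have h2 : J.encard ≤ (Set.range w).encard := by
      rw [hJ.encard_eq_eRk, M.eRk_closure_eq, hcard]
      exact (M.eRk_le_encard T).trans hT
    have h3 := Set.Finite.eq_of_subset_of_encard_le (Set.finite_range w) hIJ h2
    rw [h3]; exact hJ
  have h1 : t ∈ M.closure (Set.range w) := by
    refine hb.subset_closure ?_
    exact M.subset_closure T (by intro x _; trivial) ht
  rw [AlgebraicIndependent.matroid_closure_eq] at h1
  exact h1

theorem ptB_alg_mono {k F : Type*} [Field k] [Field F] [Algebra k F] {K : Type*} [Field K] [Algebra K F]
    (S : Subalgebra k F) (hS : ∀ x ∈ S, ∃ y : K, algebraMap K F y = x) (t : F) (ht : IsAlgebraic S t) :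
    IsAlgebraic K t := by
  choose g hg using hS
  have hinj := (algebraMap K F).injective
  let ψ : S →+* K :=
    { toFun := fun s => g s.1 s.2
      map_one' := hinj (by rw [hg]; simp)
      map_mul' := fun x y => hinj (by rw [hg, map_mul, hg, hg]; rfl)
      map_zero' := hinj (by rw [hg]; simp)
      map_add' := fun x y => hinj (by rw [hg, map_add, hg, hg]; rfl) }
  obtain ⟨P, hP, h⟩ := ht
  have hψ : (algebraMap K F).comp ψ = algebraMap S F := RingHom.ext fun s => hg s.1 s.2
  refine ⟨P.map ψ, ?_, ?_⟩
  · rw [Ne, Polynomial.map_eq_zero_iff]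
    · exact hP
    · intro x y hxy
      have := congrArg (algebraMap K F) hxy
      have h1 := RingHom.congr_fun hψ x
      have h2 := RingHom.congr_fun hψ y
      simp only [RingHom.comp_apply] at h1 h2
      rw [h1, h2] at this
      exact Subtype.ext this
  · rw [Polynomial.aeval_def, Polynomial.eval₂_map, hψ]
    exact h

theorem ptB_chain {k F : Type*} [Field k] [Field F] [Algebra k F] {n : ℕ} (Θ : Derivation k F F)
    (P : MvPolynomial (Fin n) k) (x : Fin n → F) :
    Θ (MvPolynomial.aeval x P) = ∑ i, MvPolynomial.aeval x (MvPolynomial.pderiv i P) * Θ (x i) := by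
  induction P using MvPolynomial.induction_on with
  | C a => simp
  | add p q hp hq => simp [hp, hq, add_mul, Finset.sum_add_distrib]
  | mul_X p i hp =>
    simp only [map_mul, MvPolynomial.aeval_X, Derivation.leibniz, hp, smul_eq_mul,
      MvPolynomial.pderiv_X, map_add, add_mul, Finset.sum_add_distrib]
    congr 1
    · rw [Finset.sum_eq_single i]
      · simp
      · intro b _ hb; simp [Pi.single_apply, Ne.symm hb]
      · simp
    · rw [Finset.mul_sum]
      exact Finset.sum_congr rfl fun j _ => by ring

open IntermediateField in
theorem ptB_contra {k R F Γ₀ : Type*} [Field k] [Field R] [CharZero R] [Field F] [Algebra k R] [Algebra R F]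
    [Algebra k F] [IsScalarTower k R F]
    [LinearOrderedCommGroupWithZero Γ₀] (v : Valuation F Γ₀)
    (hv : ∀ r : R, r ≠ 0 → v (algebraMap R F r) = 1)
    (hres : ∀ y : F, v y ≤ 1 → ∃ r : R, v (y - algebraMap R F r) < 1)
    {n : ℕ} (P : MvPolynomial (Fin n) k) (M : Fin n → MvPolynomial (Fin n) k)
    (w : Option (Fin n) → R) (hw : AlgebraicIndependent k w) (x : Fin n → F)
    (hx : ∀ i, v (x i) ≤ 1) (hB : ∑ i, x i ^ 2 = algebraMap R F (w none))
    (c : F) (hc : c = MvPolynomial.aeval x P) (hc0 : c ≠ 0) (hc1 : v c < 1)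
    (hgrad : ∀ i, ∀ N : ℕ, v (MvPolynomial.aeval x (MvPolynomial.pderiv i P)) ^ (N + 1) ≤ v c ^ N)
    (hL : (∃ s : F, ∀ i, MvPolynomial.aeval x (MvPolynomial.pderiv i P) = s * x i) ∨
      ∃ l m : F, ∀ i, c ^ 2 * algebraMap R F (w (some i)) =
        l * MvPolynomial.aeval x (MvPolynomial.pderiv i P) + m * x i - MvPolynomial.aeval x (M i)) :
    False := by
  classical
  have hct : Transcendental R c := ptB_transcendental v hv c hc1 hc0
  obtain ⟨Θ, hΘ⟩ := ptB_deriv c hct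
  have hch : c = ∑ i, MvPolynomial.aeval x (MvPolynomial.pderiv i P) * Θ (x i) := by
    have := ptB_chain (Θ.restrictScalars k) P x
    rw [← hc] at this
    simpa [hΘ] using this
  have hF0 : CharZero F := charZero_of_injective_algebraMap (algebraMap R F).injective
  rcases hL with ⟨s, hs⟩ | ⟨l, m, hlm⟩
  · have h1 : Θ (∑ i, x i ^ 2) = 0 := by rw [hB]; exact Θ.map_algebraMap _
    have h2 : Θ (∑ i, x i ^ 2) = 2 * ∑ i, x i * Θ (x i) := by
      rw [map_sum, Finset.mul_sum]
      refine Finset.sum_congr rfl fun i _ => ?_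
      rw [Derivation.leibniz_pow]; simp
    rw [h1] at h2
    have h3 : ∑ i, x i * Θ (x i) = 0 := by
      rcases mul_eq_zero.1 h2.symm with h | h
      · exact absurd h two_ne_zero
      · exact h
    apply hc0
    rw [hch]
    simp_rw [hs, mul_assoc]
    rw [← Finset.mul_sum, h3, mul_zero]
  -- generic case
  have hxalg : ∀ i, IsAlgebraic R⟮c⟯ (x i) := by
    intro i
    let T : Set F := Set.range x ∪ {l, m}
    have hcard : T.encard ≤ Fintype.card (Unit ⊕ Option (Fin n)) := by
      refine (Set.encard_union_le _ _).trans ?_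
      have h1 : (Set.range x).encard ≤ n := by
        rw [← Set.image_univ]
        refine (Set.encard_image_le _ _).trans ?_
        simp
      have h2 : ({l, m} : Set F).encard ≤ 2 := by
        refine (Set.encard_insert_le _ _).trans ?_
        rw [Set.encard_singleton]; norm_num
      refine (add_le_add h1 h2).trans ?_
      simp
      rw [← add_assoc, add_comm (1 : ℕ∞), add_assoc]
      norm_num
    have hwi : AlgebraicIndependent k (Sum.elim (fun _ : Unit => c) (algebraMap R F ∘ w)) := by
      refine AlgebraicIndependent.sumElim_comp hw ?_
      exact (algebraicIndependent_unique_type_iff (R := R) (x := fun _ : Unit => c)).2 hct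
    have hxT : ∀ i, x i ∈ Algebra.adjoin k T := fun i => Algebra.subset_adjoin (Or.inl ⟨i, rfl⟩)
    have hlT : l ∈ Algebra.adjoin k T := Algebra.subset_adjoin (Or.inr (by simp))
    have hmT : m ∈ Algebra.adjoin k T := Algebra.subset_adjoin (Or.inr (by simp))
    have hpT : ∀ Q : MvPolynomial (Fin n) k, MvPolynomial.aeval x Q ∈ Algebra.adjoin k T := by
      intro Q
      have h1 : MvPolynomial.aeval x Q ∈ Algebra.adjoin k (Set.range x) := by
        rw [Algebra.adjoin_range_eq_range_aeval]; exact ⟨Q, rfl⟩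
      exact Algebra.adjoin_mono Set.subset_union_left h1
    have hcT : c ∈ Algebra.adjoin k T := by rw [hc]; exact hpT P
    have hmem : ∀ y ∈ Algebra.adjoin k T, IsAlgebraic (Algebra.adjoin k T) y := fun y hy =>
      isAlgebraic_algebraMap (⟨y, hy⟩ : Algebra.adjoin k T)
    have hall := ptB_trdeg _ hwi T hcard (by
      rintro (_ | _ | j)
      · exact hmem c hcT
      · apply hmem
        simp only [Sum.elim_inr, Function.comp]
        rw [← hB]
        exact sum_mem fun i _ => pow_mem (hxT i) 2
      · simp only [Sum.elim_inr, Function.comp]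
        have h1 : c ^ 2 * algebraMap R F (w (some j)) ∈ Algebra.adjoin k T := by
          rw [hlm j]
          exact sub_mem (add_mem (mul_mem hlT (hpT _)) (mul_mem hmT (hxT _))) (hpT _)
        have h2 : algebraMap R F (w (some j)) = (c ^ 2)⁻¹ * (c ^ 2 * algebraMap R F (w (some j))) := by
          field_simp
        rw [h2]
        exact (hmem _ (pow_mem hcT 2)).inv.mul (hmem _ h1)) (x i) (Or.inl ⟨i, rfl⟩)
    refine ptB_alg_mono _ ?_ _ hall
    intro y hy
    have hle : Algebra.adjoin k (Set.range (Sum.elim (fun _ : Unit => c) (algebraMap R F ∘ w))) ≤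
        (R⟮c⟯.toSubalgebra.restrictScalars k) := by
      refine Algebra.adjoin_le ?_
      rintro _ ⟨_ | j, rfl⟩
      · exact mem_adjoin_simple_self R c
      · exact _root_.algebraMap_mem R⟮c⟯ _
    exact ⟨⟨y, hle hy⟩, rfl⟩
  have hvc : v c ≠ 0 := (map_ne_zero v).2 hc0
  have hvcpos : 0 < v c := zero_lt_iff.2 hvc
  obtain ⟨i, hi⟩ : ∃ i, v c ≤ v (MvPolynomial.aeval x (MvPolynomial.pderiv i P)) * v (Θ (x i)) := by
    by_contra! hcon
    have : v (∑ i, MvPolynomial.aeval x (MvPolynomial.pderiv i P) * Θ (x i)) < v c := by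
      refine v.map_sum_lt hvc fun i _ => ?_
      rw [map_mul]; exact hcon i
    rw [← hch] at this
    exact lt_irrefl _ this
  obtain ⟨d, hd1, hd⟩ := ptB_main v hv hres c hc0 hc1 Θ hΘ (x i) (hxalg i) (hx i)
  set A := v (MvPolynomial.aeval x (MvPolynomial.pderiv i P))
  set D := v (Θ (x i))
  have h1 : v c ^ ((d + 1) * d) ≤ v c ^ (d * d + (d + 1)) := by
    calc v c ^ ((d + 1) * d) ≤ (A * D) ^ ((d + 1) * d) := pow_le_pow_left' hi _
      _ = (A ^ (d + 1)) ^ d * (D ^ d) ^ (d + 1) := by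
        rw [mul_pow, ← pow_mul, ← pow_mul, mul_comm d (d + 1)]
      _ ≤ (v c ^ d) ^ d * (v c) ^ (d + 1) :=
        mul_le_mul' (pow_le_pow_left' (hgrad i d) _) (pow_le_pow_left' hd _)
      _ = _ := by rw [← pow_mul, ← pow_add]
  have h2 : v c ^ (d * d + (d + 1)) < v c ^ ((d + 1) * d) := by
    apply pow_lt_pow_right_of_lt_one₀ hvcpos hc1
    nlinarith
  exact absurd h1 (not_le.2 h2)


theorem ptC_ordered {k F : Type} [Field k] [Algebra k ℝ] [Field F] [LinearOrder F] [IsStrictOrderedRing F]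
    (g : ℝ →+*o F) (j : k →+* F) (hj : ∀ r, j r = g (algebraMap k ℝ r))
    {n : ℕ} (P : MvPolynomial (Fin n) k) (M : Fin n → MvPolynomial (Fin n) k)
    (w : Option (Fin n) → ℝ) (hw : AlgebraicIndependent k w) (x : Fin n → F)
    (hx : ∀ i, ∃ C : ℕ, |x i| ≤ C) (hB : ∑ i, x i ^ 2 = g (w none))
    (c : F) (hc : c = MvPolynomial.eval₂ j x P) (hc0 : c ≠ 0) (hc1 : ∀ m : ℕ, m * |c| < 1)
    (hgrad : ∀ i, ∀ N : ℕ, ∃ C : ℕ,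
      |MvPolynomial.eval₂ j x (MvPolynomial.pderiv i P)| ^ (N + 1) ≤ C * |c| ^ N)
    (hL : (∃ s : F, ∀ i, MvPolynomial.eval₂ j x (MvPolynomial.pderiv i P) = s * x i) ∨
      ∃ l m : F, ∀ i, c ^ 2 * g (w (some i)) =
        l * MvPolynomial.eval₂ j x (MvPolynomial.pderiv i P) + m * x i - MvPolynomial.eval₂ j x (M i)) :
    False := by
  let _ : Algebra ℝ F := g.toRingHom.toAlgebra
  let _ : Algebra k F := j.toAlgebra
  have hst : IsScalarTower k ℝ F := IsScalarTower.of_algebraMap_eq hj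
  let v := (ArchimedeanClass.addValuation F).toValuation
  have hvle : ∀ a b : F, v a ≤ v b ↔ ArchimedeanClass.mk b ≤ ArchimedeanClass.mk a := fun a b => Iff.rfl
  have hvlt : ∀ a b : F, v a < v b ↔ ArchimedeanClass.mk b < ArchimedeanClass.mk a := fun a b => Iff.rfl
  have hvle1 : ∀ a : F, v a ≤ 1 ↔ 0 ≤ ArchimedeanClass.mk a := fun a => by
    rw [← map_one v, hvle, ArchimedeanClass.mk_one]
  have hvlt1 : ∀ a : F, v a < 1 ↔ 0 < ArchimedeanClass.mk a := fun a => by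
    rw [← map_one v, hvlt, ArchimedeanClass.mk_one]
  have hvr : ∀ r : ℝ, r ≠ 0 → v (algebraMap ℝ F r) = 1 := by
    intro r hr
    have h1 : ArchimedeanClass.mk (g r) = ArchimedeanClass.mk 1 := by
      rw [ArchimedeanClass.mk_map_of_archimedean' g hr, ArchimedeanClass.mk_one]
    rw [← map_one v]
    exact le_antisymm ((hvle _ _).2 h1.ge) ((hvle _ _).2 h1.le)
  refine ptB_contra (k := k) (R := ℝ) v hvr ?_ P M w hw x ?_ hB c hc hc0 ?_ ?_ hL
  · intro y hy
    exact ⟨ArchimedeanClass.stdPart y, (hvlt1 _).2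
      (ArchimedeanClass.mk_sub_stdPart_pos g ((hvle1 y).1 hy))⟩
  · intro i
    obtain ⟨C, hC⟩ := hx i
    rw [← map_one v, hvle, ArchimedeanClass.mk_le_mk]
    exact ⟨C, by simpa using hC⟩
  · rw [← map_one v, hvlt, ArchimedeanClass.mk_lt_mk]
    intro m
    simpa using hc1 m
  · intro i N
    obtain ⟨C, hC⟩ := hgrad i N
    rw [← map_pow v, ← map_pow v, hvle, ArchimedeanClass.mk_le_mk]
    refine ⟨C, ?_⟩
    rw [abs_pow, abs_pow, nsmul_eq_mul]
    exact hC

theorem ptC_seq {k : Type} [Field k] [Algebra k ℝ] 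
    {n : ℕ} (P : MvPolynomial (Fin n) k) (M : Fin n → MvPolynomial (Fin n) k)
    (w : Option (Fin n) → ℝ) (hw : AlgebraicIndependent k w) (x : ℕ → Fin n → ℝ)
    (hB : ∀ m, ∑ i, x m i ^ 2 = w none)
    (c : ℕ → ℝ) (hc : ∀ m, c m = MvPolynomial.aeval (x m) P) (hc0 : ∀ m, c m ≠ 0)
    (hc1 : Tendsto c atTop (𝓝 0))
    (hgrad : ∀ i, ∀ N : ℕ, ∃ C : ℕ, ∀ᶠ m in atTop,
      |MvPolynomial.aeval (x m) (MvPolynomial.pderiv i P)| ^ (N + 1) ≤ C * |c m| ^ N)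
    (hL : ∀ m, (∃ s : ℝ, ∀ i, MvPolynomial.aeval (x m) (MvPolynomial.pderiv i P) = s * x m i) ∨
      ∃ l u : ℝ, ∀ i, c m ^ 2 * w (some i) =
        l * MvPolynomial.aeval (x m) (MvPolynomial.pderiv i P) + u * x m i
          - MvPolynomial.aeval (x m) (M i)) :
    False := by
  classical
  let U : Filter ℕ := (hyperfilter ℕ : Filter ℕ)
  let F := Germ (hyperfilter ℕ : Filter ℕ) ℝ
  let φ : (ℕ → ℝ) →+* F := Germ.coeRingHom (hyperfilter ℕ : Filter ℕ)
  have hU : (hyperfilter ℕ : Filter ℕ) ≤ atTop := by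
    rw [← Nat.cofinite_eq_atTop]; exact hyperfilter_le_cofinite
  have hφle : ∀ a b : ℕ → ℝ, (∀ᶠ m in (hyperfilter ℕ : Filter ℕ), a m ≤ b m) → φ a ≤ φ b :=
    fun a b h => Germ.coe_le.2 h
  have hφlt : ∀ a b : ℕ → ℝ, (∀ᶠ m in (hyperfilter ℕ : Filter ℕ), a m < b m) → φ a < φ b :=
    fun a b h => Germ.coe_lt.2 h
  have hφeq : ∀ a b : ℕ → ℝ, (∀ᶠ m in (hyperfilter ℕ : Filter ℕ), a m = b m) → φ a = φ b :=
    fun a b h => Germ.coe_eq.2 h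
  have hφabs : ∀ a : ℕ → ℝ, |φ a| = φ (fun m => |a m|) := fun a => Germ.abs_def (φ a)
  let g : ℝ →+*o F :=
    { (φ.comp (Pi.constRingHom ℕ ℝ)) with
      monotone' := fun a b h => hφle _ _ (Eventually.of_forall fun _ => h) }
  have hg : ∀ r, g r = φ (fun _ => r) := fun r => rfl
  let j : k →+* F := g.toRingHom.comp (algebraMap k ℝ)
  have hev : ∀ Q : MvPolynomial (Fin n) k, MvPolynomial.eval₂ j (fun i => φ (fun m => x m i)) Q =
      φ (fun m => MvPolynomial.aeval (x m) Q) := by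
    intro Q
    induction Q using MvPolynomial.induction_on with
    | C a =>
      simp only [MvPolynomial.eval₂_C, MvPolynomial.aeval_C]
      rfl
    | add p q hp hq =>
      rw [MvPolynomial.eval₂_add, hp, hq, ← map_add]
      congr 1; ext m; simp
    | mul_X p i hp =>
      rw [MvPolynomial.eval₂_mul, MvPolynomial.eval₂_X, hp, ← map_mul]
      congr 1; ext m; simp
  have hnat : ∀ C : ℕ, (C : F) = φ (fun _ => (C : ℝ)) := fun C => by
    rw [← map_natCast φ C]; rfl
  refine ptC_ordered (F := F) g j (fun r => rfl) P M w hw (fun i => φ (fun m => x m i)) ?_ ?_ (φ c) ?_ ?_ ?_ ?_ ?_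
  · intro i
    obtain ⟨C, hC⟩ := exists_nat_ge (|w none| + 1)
    refine ⟨C, ?_⟩
    rw [hφabs, hnat]
    refine hφle _ _ (Eventually.of_forall fun m => ?_)
    have h1 : x m i ^ 2 ≤ w none := by
      rw [← hB m]
      exact Finset.single_le_sum (f := fun i => x m i ^ 2) (fun i _ => sq_nonneg _) (Finset.mem_univ i)
    have h2 := le_abs_self (w none)
    have h3 : |x m i| ^ 2 ≤ |w none| := by rw [sq_abs]; linarith
    nlinarith [abs_nonneg (x m i), abs_nonneg (w none)]
  · rw [hg, ← (funext hB)]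
    have : (fun m => ∑ i, x m i ^ 2) = ∑ i, (fun m => x m i) ^ 2 := by ext m; simp
    rw [this]; simp
  · rw [hev]; congr 1; exact funext hc
  · intro h
    have : ∀ᶠ m in (hyperfilter ℕ : Filter ℕ), c m = 0 := Germ.coe_eq.1 (h : φ c = ((0 : ℕ → ℝ) : F))
    obtain ⟨m, hm⟩ := this.exists
    exact hc0 m hm
  · intro m
    rw [hφabs, hnat, ← map_mul, ← map_one φ]
    refine hφlt _ _ ?_
    have h1 : Tendsto (fun q => (m : ℝ) * |c q|) atTop (𝓝 0) := by
      simpa using (hc1.abs).const_mul (m : ℝ)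
    filter_upwards [hU (h1.eventually (gt_mem_nhds zero_lt_one))] with q hq
    simpa using hq
  · intro i N
    obtain ⟨C, hC⟩ := hgrad i N
    refine ⟨C, ?_⟩
    rw [hev, hφabs, hφabs, hnat, ← map_pow, ← map_pow, ← map_mul]
    refine hφle _ _ ?_
    filter_upwards [hU hC] with q hq
    simpa using hq
  · rcases Ultrafilter.eventually_or.1 (Eventually.of_forall hL :
      ∀ᶠ m in (hyperfilter ℕ : Filter ℕ), _ ∨ _) with h | h
    · left
      choose! s hs using fun m (h : (∃ s : ℝ, ∀ i, MvPolynomial.aeval (x m) (MvPolynomial.pderiv i P) = s * x m i)) => h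
      refine ⟨φ s, fun i => ?_⟩
      rw [hev, ← map_mul]
      refine hφeq _ _ ?_
      filter_upwards [h] with m hm
      exact hs m hm i
    · right
      choose! l u hlu using fun m (h : ∃ l u : ℝ, ∀ i, c m ^ 2 * w (some i) =
        l * MvPolynomial.aeval (x m) (MvPolynomial.pderiv i P) + u * x m i
          - MvPolynomial.aeval (x m) (M i)) => h
      refine ⟨φ l, φ u, fun i => ?_⟩
      rw [hev, hev, hg, ← map_mul, ← map_pow, ← map_mul, ← map_mul, ← map_add, ← map_sub]
      refine hφeq _ _ ?_
      filter_upwards [h] with m hm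
      exact hlu m hm i


theorem ptC_countable_adjoin {k : Type} [Field k] [Countable k] [Algebra k ℝ] (s : Set ℝ) (hs : s.Countable) :
    Countable (Algebra.adjoin k s) := by
  have := Algebra.cardinalMk_adjoin_le k s
  rw [← Cardinal.mk_le_aleph0_iff]
  refine this.trans ?_
  simp [Cardinal.mk_le_aleph0_iff, hs.to_subtype]

theorem ptC_generic (k : Type) [Field k] [Countable k] [Algebra k ℝ] (n : ℕ) :
    ∃ w : Option (Fin n) → ℝ, AlgebraicIndependent k w ∧ 0 < w none := by
  obtain ⟨s, hs⟩ := exists_isTranscendenceBasis k ℝ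
  have hinf : Infinite s := by
    by_contra hcon
    have hfin : Finite s := not_infinite_iff_finite.1 hcon
    have hcount : (Set.range (Subtype.val : s → ℝ)).Countable := Set.countable_range _
    have := ptC_countable_adjoin (k := k) _ hcount
    have h1 := Algebraic.countable (Algebra.adjoin k (Set.range (Subtype.val : s → ℝ))) ℝ
    have h2 : {x : ℝ | IsAlgebraic (Algebra.adjoin k (Set.range (Subtype.val : s → ℝ))) x} = Set.univ := by
      ext x; simp [hs.isAlgebraic.isAlgebraic x]
    rw [h2] at h1
    exact Cardinal.not_countable_real h1
  obtain ⟨e⟩ : Nonempty (Fin n ↪ s) := by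
    exact ⟨Fin.valEmbedding.trans (Infinite.natEmbedding s)⟩
  let a : Fin n → ℝ := fun i => (e i : ℝ)
  have ha : AlgebraicIndependent k a := hs.1.comp e e.injective
  have := ptC_countable_adjoin (k := k) _ (Set.countable_range a)
  have h1 := Algebraic.countable (Algebra.adjoin k (Set.range a)) ℝ
  have h2 : ¬ (Set.Ioi (0 : ℝ)).Countable := by
    rw [← Set.countable_coe_iff, ← Cardinal.mk_le_aleph0_iff, Cardinal.mk_Ioi_real]
    exact not_le.2 Cardinal.aleph0_lt_continuum
  obtain ⟨b, hb, hb'⟩ : ∃ b ∈ Set.Ioi (0 : ℝ), ¬ IsAlgebraic (Algebra.adjoin k (Set.range a)) b := by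
    by_contra! hcon
    exact h2 (h1.mono hcon)
  exact ⟨fun o => o.elim b a, AlgebraicIndependent.option_iff.2 ⟨ha, hb'⟩, hb⟩

theorem ptC_descend {n : ℕ} (P : MvPolynomial (Fin n) ℝ) :
    ∃ (k : Subfield ℝ) (_ : Countable k) (P0 : MvPolynomial (Fin n) k),
      MvPolynomial.map (algebraMap k ℝ) P0 = P := by
  let S : Set ℝ := Set.image (fun m => P.coeff m) (P.support : Set _)
  have hS : S.Finite := (P.support.finite_toSet).image _
  refine ⟨Subfield.closure S, ?_, ?_⟩
  · rw [← Cardinal.mk_le_aleph0_iff]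
    refine (Subfield.cardinalMk_closure_le_max S).trans ?_
    simp [Cardinal.mk_le_aleph0_iff, hS.countable.to_subtype]
  · have hm : ∀ m : P.support, P.coeff m.1 ∈ Subfield.closure S := fun m =>
      Subfield.subset_closure ⟨m.1, m.2, rfl⟩
    refine ⟨∑ m : P.support, MvPolynomial.monomial m.1 ⟨P.coeff m.1, hm m⟩, ?_⟩
    rw [map_sum]
    simp only [MvPolynomial.map_monomial]
    conv_rhs => rw [P.as_sum]
    exact Finset.sum_coe_sort P.support (fun m => MvPolynomial.monomial m (P.coeff m))


theorem ptC_strict {k : Type} [Field k] [Algebra k ℝ] {n : ℕ} (Q : MvPolynomial (Fin n) k) (x : Fin n → ℝ) :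
    HasStrictFDerivAt (fun y : Fin n → ℝ => MvPolynomial.aeval y Q)
      (∑ i, MvPolynomial.aeval x (MvPolynomial.pderiv i Q) • (ContinuousLinearMap.proj i : (Fin n → ℝ) →L[ℝ] ℝ)) x := by
  classical
  induction Q using MvPolynomial.induction_on with
  | C a =>
    simp only [MvPolynomial.aeval_C, MvPolynomial.pderiv_C, map_zero, zero_smul, Finset.sum_const_zero]
    exact hasStrictFDerivAt_const _ _
  | add P Q hP hQ =>
    simp only [map_add, add_smul, Finset.sum_add_distrib]
    exact hP.add hQ
  | mul_X P j hP =>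
    simp only [map_mul, MvPolynomial.aeval_X]
    have hj : HasStrictFDerivAt (fun y : Fin n → ℝ => y j)
      (ContinuousLinearMap.proj j : (Fin n → ℝ) →L[ℝ] ℝ) x :=
      (ContinuousLinearMap.proj j : (Fin n → ℝ) →L[ℝ] ℝ).hasStrictFDerivAt
    refine (hP.mul hj).congr_fderiv ?_
    ext v
    simp only [MvPolynomial.pderiv_mul, MvPolynomial.pderiv_X, map_add, map_mul, MvPolynomial.aeval_X, add_smul,
      Finset.sum_add_distrib]
    simp [Pi.single_apply, Finset.mul_sum, apply_ite, mul_comm, mul_left_comm]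
    ring_nf
    

theorem ptC_lagrange {k : Type} [Field k] [Algebra k ℝ] {n : ℕ} (P S : MvPolynomial (Fin n) k)
    (a : Fin n → ℝ) (b : ℝ) (hb : 0 < b) (c : ℝ) (x0 : Fin n → ℝ) (h0 : ∑ i, x0 i ^ 2 = b)
    (h0c : MvPolynomial.aeval x0 P = c) :
    ∃ x : Fin n → ℝ, ∑ i, x i ^ 2 = b ∧ MvPolynomial.aeval x P = c ∧
      MvPolynomial.aeval x S + c ^ 2 * ∑ i, a i * x i ≤ MvPolynomial.aeval x0 S + c ^ 2 * ∑ i, a i * x0 i ∧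
      ((∃ s : ℝ, ∀ i, MvPolynomial.aeval x (MvPolynomial.pderiv i P) = s * x i) ∨
        ∃ l u : ℝ, ∀ i, c ^ 2 * a i = l * MvPolynomial.aeval x (MvPolynomial.pderiv i P) + u * x i
          - MvPolynomial.aeval x (MvPolynomial.pderiv i S)) := by
  classical
  have hcont : ∀ Q : MvPolynomial (Fin n) k, Continuous (fun y : Fin n → ℝ => MvPolynomial.aeval y Q) :=
    fun Q => continuous_iff_continuousAt.2 fun y => (ptC_strict Q y).hasFDerivAt.continuousAt
  let K : Set (Fin n → ℝ) := {y | ∑ i, y i ^ 2 = b ∧ MvPolynomial.aeval y P = c}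
  have hKc : IsClosed K := by
    apply IsClosed.inter
    · exact isClosed_eq (by fun_prop) continuous_const
    · exact isClosed_eq (hcont P) continuous_const
  have hKcomp : IsCompact K := by
    refine Metric.isCompact_of_isClosed_isBounded hKc ?_
    refine (Metric.isBounded_closedBall (x := (0 : Fin n → ℝ)) (r := Real.sqrt b)).subset ?_
    intro y hy
    rw [mem_closedBall_zero_iff, pi_norm_le_iff_of_nonneg (Real.sqrt_nonneg _)]
    intro i
    rw [Real.norm_eq_abs]
    apply Real.abs_le_sqrt
    rw [← hy.1]
    exact Finset.single_le_sum (f := fun i => y i ^ 2) (fun i _ => sq_nonneg _) (Finset.mem_univ i)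
  let φ : (Fin n → ℝ) → ℝ := fun y => MvPolynomial.aeval y S + c ^ 2 * ∑ i, a i * y i
  have hφc : Continuous φ := by
    have := hcont S
    fun_prop
  obtain ⟨x, hxK, hmin⟩ := hKcomp.exists_isMinOn ⟨x0, h0, h0c⟩ hφc.continuousOn
  refine ⟨x, hxK.1, hxK.2, hmin (show x0 ∈ K from ⟨h0, h0c⟩), ?_⟩
  let F : Bool → (Fin n → ℝ) → ℝ := fun t y => cond t (MvPolynomial.aeval y P) (∑ i, y i ^ 2)
  let F' : Bool → (Fin n → ℝ) →L[ℝ] ℝ := fun t => cond t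
    (∑ i, MvPolynomial.aeval x (MvPolynomial.pderiv i P) • (ContinuousLinearMap.proj i : (Fin n → ℝ) →L[ℝ] ℝ))
    (∑ i, (2 * x i) • (ContinuousLinearMap.proj i : (Fin n → ℝ) →L[ℝ] ℝ))
  have hproj : ∀ i, HasStrictFDerivAt (fun y : Fin n → ℝ => y i)
      (ContinuousLinearMap.proj i : (Fin n → ℝ) →L[ℝ] ℝ) x := fun i =>
      (ContinuousLinearMap.proj i : (Fin n → ℝ) →L[ℝ] ℝ).hasStrictFDerivAt
  have hF' : ∀ t, HasStrictFDerivAt (F t) (F' t) x := by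
    intro t
    cases t
    · refine (HasStrictFDerivAt.fun_sum (u := Finset.univ) fun i _ => (hproj i).pow 2).congr_fderiv ?_
      ext v; simp [F']
    · exact ptC_strict P x
  have hφ' : HasStrictFDerivAt φ
      ((∑ i, MvPolynomial.aeval x (MvPolynomial.pderiv i S) • (ContinuousLinearMap.proj i : (Fin n → ℝ) →L[ℝ] ℝ))
      + c ^ 2 • ∑ i, a i • (ContinuousLinearMap.proj i : (Fin n → ℝ) →L[ℝ] ℝ)) x := by
    refine (ptC_strict S x).add ?_
    exact (HasStrictFDerivAt.fun_sum (u := Finset.univ) fun i _ => (hproj i).const_mul (a i)).const_mul (c ^ 2)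
  have hset : {y | ∀ t, F t y = F t x} ⊆ K := by
    intro y hy
    have h1 := hy false
    have h2 := hy true
    simp only [F, cond_true, cond_false] at h1 h2
    exact ⟨h1.trans hxK.1, h2.trans hxK.2⟩
  have hext : IsLocalExtrOn φ {y | ∀ t, F t y = F t x} x := 
    Or.inl ((hmin.on_subset hset).localize)
  obtain ⟨Λ, Λ₀, hne, hsum⟩ := hext.exists_multipliers_of_hasStrictFDerivAt hF' hφ'
  have hi : ∀ i, Λ true * MvPolynomial.aeval x (MvPolynomial.pderiv i P) + Λ false * (2 * x i) +
      Λ₀ * (MvPolynomial.aeval x (MvPolynomial.pderiv i S) + c ^ 2 * a i) = 0 := by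
    intro i
    have := congrArg (fun T : (Fin n → ℝ) →L[ℝ] ℝ => T (Pi.single i 1)) hsum
    simpa [F', Pi.single_apply, mul_add] using this
  by_cases hΛ0 : Λ₀ = 0
  · left
    by_cases hΛ1 : Λ true = 0
    · exfalso
      have hΛ2 : Λ false ≠ 0 := by
        intro h
        apply hne
        ext t
        · cases t <;> simp [h, hΛ1]
        · simp [hΛ0]
      have : ∀ i, x i = 0 := by
        intro i
        have := hi i
        simp [hΛ0, hΛ1, hΛ2] at this
        exact this
      have h3 := hxK.1
      simp [this] at h3
      exact hb.ne h3
    · refine ⟨-(2 * Λ false) / Λ true, fun i => ?_⟩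
      have := hi i
      rw [hΛ0] at this
      field_simp
      linarith
  · right
    refine ⟨-Λ true / Λ₀, -(2 * Λ false) / Λ₀, fun i => ?_⟩
    have := hi i
    field_simp
    linarith


theorem ptC_num {A t D g y : ℝ} {m N : ℕ} (hA : 0 ≤ A) (ht : 0 ≤ t) (ht1 : t ≤ 1) (hD : 0 ≤ D)
    (hm : N ≤ m) (hAm : A ^ (m + 1) ≤ t ^ m) (hg : g ^ 2 ≤ A + t * D) (hy : y ^ 2 = t) (hy0 : 0 ≤ y)
    (hg0 : 0 ≤ g) (C : ℕ) (hC1 : 1 ≤ C) (hC : 2 ^ N * (1 + D ^ (N + 1)) ≤ C) :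
    g ^ (N + 1) ≤ C * y ^ N := by
  have h1 : A ^ (N + 1) ≤ t ^ N := by
    have h : (A ^ (N + 1)) ^ (m + 1) ≤ (t ^ N) ^ (m + 1) := by
      calc (A ^ (N + 1)) ^ (m + 1) = (A ^ (m + 1)) ^ (N + 1) := by ring
        _ ≤ (t ^ m) ^ (N + 1) := by gcongr
        _ = t ^ (m * (N + 1)) := by rw [pow_mul]
        _ ≤ t ^ (N * (m + 1)) := pow_le_pow_of_le_one ht ht1 (by nlinarith)
        _ = _ := by rw [pow_mul]
    exact le_of_pow_le_pow_left₀ (by omega) (by positivity) h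
  have h2 : (A + t * D) ^ (N + 1) ≤ C * t ^ N := by
    calc (A + t * D) ^ (N + 1) ≤ 2 ^ N * (A ^ (N + 1) + (t * D) ^ (N + 1)) := by
          have := add_pow_le hA (by positivity : 0 ≤ t * D) (N + 1)
          simpa using this
      _ ≤ 2 ^ N * (t ^ N + t ^ N * D ^ (N + 1)) := by
          gcongr
          rw [mul_pow]
          gcongr ?_ * _
          exact pow_le_pow_of_le_one ht ht1 (by omega)
      _ = (2 ^ N * (1 + D ^ (N + 1))) * t ^ N := by ring
      _ ≤ _ := by gcongr
  have hC1' : (1 : ℝ) ≤ C := by exact_mod_cast hC1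
  refine le_of_pow_le_pow_left₀ (n := 2) (by omega) (by positivity) ?_
  calc (g ^ (N + 1)) ^ 2 = (g ^ 2) ^ (N + 1) := by ring
    _ ≤ (A + t * D) ^ (N + 1) := by gcongr
    _ ≤ C * t ^ N := h2
    _ ≤ C ^ 2 * t ^ N := by gcongr; nlinarith
    _ = _ := by rw [← hy]; ring

theorem ptC_loj {k : Type} [Field k] [Countable k] [Algebra k ℝ] {n : ℕ} (P : MvPolynomial (Fin n) k) :
    ∃ b : ℝ, 0 < b ∧ ∃ N : ℕ, ∃ ε : ℝ, 0 < ε ∧ ∀ x : Fin n → ℝ, ∑ i, x i ^ 2 = b →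
      MvPolynomial.aeval x P ≠ 0 → |MvPolynomial.aeval x P| < ε →
      (|MvPolynomial.aeval x P| ^ 2) ^ N ≤
        (∑ j, MvPolynomial.aeval x (MvPolynomial.pderiv j P) ^ 2) ^ (N + 1) := by
  classical
  obtain ⟨w, hw, hb⟩ := ptC_generic k n
  refine ⟨w none, hb, ?_⟩
  by_contra! hcon
  have hex := fun m : ℕ => hcon m (1 / ((m : ℝ) + 1)) (by positivity)
  choose x0 hx0b hx0ne hx0ε hx0lt using hex
  let S : MvPolynomial (Fin n) k := ∑ j, MvPolynomial.pderiv j P ^ 2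
  have hS : ∀ y : Fin n → ℝ, MvPolynomial.aeval y S = ∑ j, MvPolynomial.aeval y (MvPolynomial.pderiv j P) ^ 2 := by
    intro y; simp [S]
  choose x hxb hxc hxle hxL using fun m => ptC_lagrange P S (fun i => w (some i)) (w none) hb
    (MvPolynomial.aeval (x0 m) P) (x0 m) (hx0b m) rfl
  have hbound : ∀ y : Fin n → ℝ, ∑ i, y i ^ 2 = w none →
      |∑ i, w (some i) * y i| ≤ (∑ i, |w (some i)|) * Real.sqrt (w none) := by
    intro y hy
    rw [Finset.sum_mul]
    refine (Finset.abs_sum_le_sum_abs _ _).trans (Finset.sum_le_sum fun i _ => ?_)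
    rw [abs_mul]
    gcongr
    apply Real.abs_le_sqrt
    rw [← hy]
    exact Finset.single_le_sum (f := fun i => y i ^ 2) (fun i _ => sq_nonneg _) (Finset.mem_univ i)
  refine ptC_seq P (fun i => MvPolynomial.pderiv i S) w hw x hxb (fun m => MvPolynomial.aeval (x0 m) P)
    (fun m => (hxc m).symm) hx0ne ?_ ?_ hxL
  · rw [tendsto_zero_iff_abs_tendsto_zero]
    exact squeeze_zero (fun m => abs_nonneg _) (fun m => (hx0ε m).le) tendsto_one_div_add_atTop_nhds_zero_nat
  · intro i N
    set D : ℝ := 2 * ((∑ i, |w (some i)|) * Real.sqrt (w none)) with hD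
    have hD0 : 0 ≤ D := by
      have : 0 ≤ ∑ i, |w (some i)| := Finset.sum_nonneg fun i _ => abs_nonneg _
      positivity
    obtain ⟨C, hC⟩ := exists_nat_ge (2 ^ N * (1 + D ^ (N + 1)))
    refine ⟨C + 1, ?_⟩
    filter_upwards [eventually_ge_atTop N] with m hm
    set c := MvPolynomial.aeval (x0 m) P
    have hc1 : |c| ≤ 1 := by
      refine (hx0ε m).le.trans ?_
      rw [div_le_one (by positivity)]
      have : (0 : ℝ) ≤ m := by positivity
      linarith
    refine ptC_num (A := ∑ j, MvPolynomial.aeval (x0 m) (MvPolynomial.pderiv j P) ^ 2) (t := |c| ^ 2) (D := D)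
      (m := m) (Finset.sum_nonneg fun i _ => sq_nonneg _) (by positivity) ?_ hD0 hm (hx0lt m).le ?_ rfl
      (abs_nonneg _) (abs_nonneg _) (C + 1) (by omega) (by push_cast; linarith)
    · exact pow_le_one₀ (abs_nonneg _) hc1
    · have h1 := hxle m
      rw [hS, hS] at h1
      have h2 := abs_le.1 (hbound (x m) (hxb m))
      have h3 := abs_le.1 (hbound (x0 m) (hx0b m))
      have h4 : MvPolynomial.aeval (x m) (MvPolynomial.pderiv i P) ^ 2 ≤
          ∑ j, MvPolynomial.aeval (x m) (MvPolynomial.pderiv j P) ^ 2 :=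
        Finset.single_le_sum (f := fun j => MvPolynomial.aeval (x m) (MvPolynomial.pderiv j P) ^ 2)
          (fun i _ => sq_nonneg _) (Finset.mem_univ i)
      rw [sq_abs, sq_abs]
      have h5 : c ^ 2 * (∑ i, w (some i) * x0 m i - ∑ i, w (some i) * x m i) ≤ c ^ 2 * D := by
        gcongr
        linarith [h2.1, h3.2]
      linarith [mul_sub (c ^ 2) (∑ i, w (some i) * x0 m i) (∑ i, w (some i) * x m i)]


theorem ptD_euler {n : ℕ} {f : EuclideanSpace ℝ (Fin n) → ℝ} (hf : Differentiable ℝ f) (p : ℕ)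
    (hhom : ∀ t : ℝ, 0 < t → ∀ x, f (t • x) = t ^ p * f x) (x : EuclideanSpace ℝ (Fin n)) :
    fderiv ℝ f x x = p * f x := by
  have h1 : HasDerivAt (fun t : ℝ => f (t • x)) (fderiv ℝ f x x) 1 := by
    have hd : HasDerivAt (fun t : ℝ => t • x) x 1 := by
      simpa using (hasDerivAt_id (1 : ℝ)).smul_const x
    have hx : HasFDerivAt f (fderiv ℝ f x) ((1 : ℝ) • x) := by
      rw [one_smul]; exact (hf x).hasFDerivAt
    exact hx.comp_hasDerivAt (1 : ℝ) hd
  have h2 : HasDerivAt (fun t : ℝ => f (t • x)) (p * f x) 1 := by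
    have h3 : HasDerivAt (fun t : ℝ => t ^ p * f x) (p * f x) 1 := by
      simpa using (hasDerivAt_pow p (1 : ℝ)).mul_const (f x)
    refine h3.congr_of_eventuallyEq ?_
    filter_upwards [lt_mem_nhds (zero_lt_one : (0 : ℝ) < 1)] with t ht
    exact hhom t ht x
  exact h1.unique h2

theorem ptD_fderiv_hom {n : ℕ} {f : EuclideanSpace ℝ (Fin n) → ℝ} (hf : Differentiable ℝ f) (p : ℕ)
    (hhom : ∀ t : ℝ, 0 < t → ∀ x, f (t • x) = t ^ (p + 1) * f x) (t : ℝ) (ht : 0 < t)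
    (x : EuclideanSpace ℝ (Fin n)) :
    fderiv ℝ f (t • x) = t ^ p • fderiv ℝ f x := by
  have h1 : HasFDerivAt (fun y => f (t • y)) (t • fderiv ℝ f (t • x)) x := by
    have hd : HasFDerivAt (fun y : EuclideanSpace ℝ (Fin n) => t • y)
      (t • ContinuousLinearMap.id ℝ (EuclideanSpace ℝ (Fin n))) x := (hasFDerivAt_id x).const_smul t
    refine ((hf (t • x)).hasFDerivAt.comp x hd).congr_fderiv ?_
    ext v; simp
  have h2 : HasFDerivAt (fun y => f (t • y)) (t ^ (p + 1) • fderiv ℝ f x) x := by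
    have := (hf x).hasFDerivAt.const_mul (t ^ (p + 1))
    have he : (fun y => f (t • y)) = fun y => t ^ (p + 1) * f y := by
      ext y; exact hhom t ht y
    rw [he]; exact this
  have h3 := h1.unique h2
  have : t • fderiv ℝ f (t • x) = t • (t ^ p • fderiv ℝ f x) := by
    rw [h3, smul_smul]; congr 1; ring
  exact smul_right_injective _ ht.ne' this

theorem ptD_poly {n : ℕ} (p : ℕ) : ∀ {f : EuclideanSpace ℝ (Fin n) → ℝ} (_ : ContDiff ℝ ((⊤ : ℕ∞) : WithTop ℕ∞) f)
    (_ : ∀ t : ℝ, 0 < t → ∀ x, f (t • x) = t ^ p * f x),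
    ∃ P : MvPolynomial (Fin n) ℝ, ∀ x : EuclideanSpace ℝ (Fin n), f x = MvPolynomial.aeval (fun i => x i) P := by
  induction p with
  | zero =>
    intro f hf hhom
    refine ⟨MvPolynomial.C (f 0), fun x => ?_⟩
    simp only [MvPolynomial.aeval_C, Algebra.algebraMap_self, RingHom.id_apply]
    have h1 : Tendsto (fun t : ℝ => f (t • x)) (𝓝[>] 0) (𝓝 (f ((0 : ℝ) • x))) := by
      have : Continuous (fun t : ℝ => f (t • x)) := hf.continuous.comp (by fun_prop)
      exact (this.tendsto 0).mono_left nhdsWithin_le_nhds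
    have h2 : Tendsto (fun t : ℝ => f (t • x)) (𝓝[>] 0) (𝓝 (f x)) := by
      refine tendsto_const_nhds.congr' ?_
      filter_upwards [self_mem_nhdsWithin] with t ht
      rw [hhom t ht x]; simp
    rw [zero_smul] at h1
    exact tendsto_nhds_unique h2 h1
  | succ p ih =>
    intro f hf hhom
    have hd : Differentiable ℝ f := hf.differentiable (by simp)
    have hi : ∀ i : Fin n, ∃ P : MvPolynomial (Fin n) ℝ, ∀ x : EuclideanSpace ℝ (Fin n),
        fderiv ℝ f x (EuclideanSpace.single i 1) = MvPolynomial.aeval (fun i => x i) P := by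
      intro i
      apply ih
      · exact (hf.fderiv_right (m := ((⊤ : ℕ∞) : WithTop ℕ∞)) (by simp)).clm_apply contDiff_const
      · intro t ht x
        rw [ptD_fderiv_hom hd p hhom t ht x]; simp
    choose P hP using hi
    refine ⟨MvPolynomial.C ((p + 1 : ℝ)⁻¹) * ∑ i, MvPolynomial.X i * P i, fun x => ?_⟩
    have h1 := ptD_euler hd (p + 1) hhom x
    have h2 : fderiv ℝ f x x = ∑ i, x i * fderiv ℝ f x (EuclideanSpace.single i 1) := by
      have hx : x = ∑ i, x i • EuclideanSpace.single i (1 : ℝ) := by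
        ext j; simp [Pi.single_apply]
      have h3 := congrArg (fderiv ℝ f x) hx
      rw [map_sum] at h3
      rw [h3]
      simp
    simp only [map_mul, map_sum, MvPolynomial.aeval_C, MvPolynomial.aeval_X, ← hP]
    rw [← h2, h1]
    have : (p + 1 : ℝ) ≠ 0 := by positivity
    simp; field_simp

theorem ptD_grad {n : ℕ} {k : Type} [Field k] [Algebra k ℝ] {f : EuclideanSpace ℝ (Fin n) → ℝ}
    (P : MvPolynomial (Fin n) k) (hP : ∀ x : EuclideanSpace ℝ (Fin n), f x = MvPolynomial.aeval (fun i => x i) P)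
    (x : EuclideanSpace ℝ (Fin n)) :
    ‖gradient f x‖ ^ 2 = ∑ i, MvPolynomial.aeval (fun i => x i) (MvPolynomial.pderiv i P) ^ 2 := by
  rw [EuclideanSpace.norm_sq_eq]
  refine Finset.sum_congr rfl fun i _ => ?_
  rw [Real.norm_eq_abs, sq_abs]
  congr 1
  have h1 : HasFDerivAt (𝕜 := ℝ) f ((∑ i, MvPolynomial.aeval (fun i => x i) (MvPolynomial.pderiv i P) •
      (ContinuousLinearMap.proj i : (Fin n → ℝ) →L[ℝ] ℝ)).comp
      (PiLp.continuousLinearEquiv 2 ℝ (fun _ : Fin n => ℝ)).toContinuousLinearMap) x := by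
    have h := (ptC_strict P (fun i => x i)).hasFDerivAt
    have h2 := h.comp x (PiLp.continuousLinearEquiv 2 ℝ (fun _ : Fin n => ℝ)).hasFDerivAt
    refine h2.congr_of_eventuallyEq (Eventually.of_forall fun y => ?_)
    exact hP y
  have h3 : gradient f x i = ⟪gradient f x, EuclideanSpace.single i (1 : ℝ)⟫ := by
    rw [EuclideanSpace.inner_single_right]; simp only [one_mul, conj_trivial]
  rw [h3, gradient, InnerProductSpace.toDual_symm_apply, h1.fderiv]
  simp

theorem ptD_loj {n : ℕ} {f : EuclideanSpace ℝ (Fin n) → ℝ} (hf : ContDiff ℝ ((⊤ : ℕ∞) : WithTop ℕ∞) f) (p : ℕ)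
    (hhom : ∀ t : ℝ, 0 < t → ∀ x, f (t • x) = t ^ (p + 1) * f x) :
    ∃ N : ℕ, ∃ C : ℝ, 0 < C ∧ ∃ ε : ℝ, 0 < ε ∧ ∀ u : EuclideanSpace ℝ (Fin n), ‖u‖ = 1 → f u ≠ 0 → |f u| < ε →
      C * (|f u| ^ 2) ^ N ≤ (‖gradient f u‖ ^ 2) ^ (N + 1) := by
  obtain ⟨P, hP⟩ := ptD_poly (p + 1) hf hhom
  obtain ⟨k, hk, P0, rfl⟩ := ptC_descend P
  have hP' : ∀ x : EuclideanSpace ℝ (Fin n), f x = MvPolynomial.aeval (fun i => x i) P0 := by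
    intro x; rw [hP, MvPolynomial.aeval_map_algebraMap]
  obtain ⟨b, hb, N, ε, hε, H⟩ := ptC_loj P0
  set R := Real.sqrt b with hR
  have hR0 : 0 < R := Real.sqrt_pos.2 hb
  have hg : ∀ u, ‖gradient f (R • u)‖ = R ^ p * ‖gradient f u‖ := by
    intro u
    rw [gradient, gradient, ptD_fderiv_hom (hf.differentiable (by simp)) p hhom R hR0 u, map_smul, norm_smul]
    simp [abs_of_pos hR0]
  refine ⟨N, ((R ^ (p + 1)) ^ 2) ^ N / ((R ^ p) ^ 2) ^ (N + 1), by positivity, ε / R ^ (p + 1), by positivity, ?_⟩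
  intro u hu hfu hfu'
  have h := H (fun i => (R • u) i) ?_ ?_ ?_
  · rw [← hP', ← ptD_grad P0 hP', hg, hhom R hR0, abs_mul, abs_of_pos (pow_pos hR0 _)] at h
    rw [div_mul_eq_mul_div, div_le_iff₀ (by positivity), ← mul_pow, ← mul_pow, ← mul_pow, ← mul_pow]
    rwa [mul_comm ‖gradient f u‖]
  · have : ‖R • u‖ ^ 2 = b := by
      rw [norm_smul, hu, mul_one, Real.norm_eq_abs, sq_abs, hR, Real.sq_sqrt hb.le]
    rw [EuclideanSpace.norm_sq_eq] at this
    simpa only [Real.norm_eq_abs, sq_abs] using this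
  · rw [← hP', hhom R hR0]; positivity
  · rw [← hP', hhom R hR0, abs_mul, abs_of_pos (pow_pos hR0 _)]
    rwa [lt_div_iff₀' (by positivity)] at hfu'


theorem ptD_dyn (s0 L : ℝ) (hs0 : s0 < L) (F g q : ℝ → ℝ) (p α c : ℝ) (hp : 0 < p) (hα : 0 < α) (hc : 0 < c)
    (hF : ∀ s ∈ Set.Ico s0 L, F s < 0) (hq : ∀ s ∈ Set.Ico s0 L, 0 < q s) (hg : ∀ s ∈ Set.Ico s0 L, 0 < g s)
    (hF' : ∀ s ∈ Set.Ico s0 L, HasDerivAt F (g s) s)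
    (hq' : ∀ s ∈ Set.Ico s0 L, HasDerivAt q (2 * p * F s / g s) s)
    (hcond : ∀ s ∈ Set.Ico s0 L, c ≤ (g s ^ 2 * q s / F s ^ 2 - p ^ 2) *
      Real.exp (α * (Real.log (- F s) - p / 2 * Real.log (q s))))
    (hlim : Tendsto q (𝓝[<] L) (𝓝 0)) : False := by
  let Φ : ℝ → ℝ := fun s => Real.exp (α * (Real.log (- F s) - p / 2 * Real.log (q s)))
    - (α * c / (2 * p)) * Real.log (q s)
  have hΦ : ∀ s ∈ Set.Ico s0 L, HasDerivAt Φ ((α / (2 * p)) * (2 * p * F s / g s / q s) *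
      ((g s ^ 2 * q s / F s ^ 2 - p ^ 2) *
      Real.exp (α * (Real.log (- F s) - p / 2 * Real.log (q s))) - c)) s := by
    intro s hs
    have h1 := (hF' s hs).neg.log (neg_ne_zero.2 (hF s hs).ne)
    have h2 := (hq' s hs).log (hq s hs).ne'
    have h3 := (((h1.sub (h2.const_mul (p / 2))).const_mul α).exp).sub (h2.const_mul (α * c / (2 * p)))
    refine h3.congr_deriv ?_
    have a1 := (hF s hs).ne
    have a2 := (hq s hs).ne'
    have a3 := (hg s hs).ne'
    simp only [Pi.neg_apply]
    generalize Real.exp _ = e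
    field_simp
  have hanti : AntitoneOn Φ (Set.Ico s0 L) := by
    refine antitoneOn_of_hasDerivWithinAt_nonpos (convex_Ico _ _)
      (fun s hs => (hΦ s hs).continuousAt.continuousWithinAt)
      (fun s hs => (hΦ s (interior_subset hs)).hasDerivWithinAt) ?_
    intro s hs
    have hs := interior_subset hs
    have h1 : 2 * p * F s / g s / q s ≤ 0 := by
      have := hF s hs
      have := hq s hs
      have := hg s hs
      rw [div_div]
      apply div_nonpos_of_nonpos_of_nonneg
      · nlinarith
      · positivity
    have h2 := hcond s hs
    apply mul_nonpos_of_nonpos_of_nonneg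
    · exact mul_nonpos_of_nonneg_of_nonpos (by positivity) h1
    · linarith
  have hev : ∀ᶠ s in 𝓝[<] L, s ∈ Set.Ico s0 L := by
    filter_upwards [Ioo_mem_nhdsLT hs0] with s hs
    exact ⟨hs.1.le, hs.2⟩
  have hq0 : Tendsto q (𝓝[<] L) (𝓝[>] 0) :=
    tendsto_nhdsWithin_iff.2 ⟨hlim, hev.mono fun s hs => hq s hs⟩
  have hlog : Tendsto (fun s => Real.log (q s)) (𝓝[<] L) atBot := Real.tendsto_log_nhdsGT_zero.comp hq0
  have h4 := (hlog.eventually (eventually_lt_atBot (-(Φ s0) / (α * c / (2 * p))))).and hev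
  obtain ⟨s, h5, hs⟩ := h4.exists
  have h6 : Φ s ≤ Φ s0 := hanti ⟨le_refl _, hs0⟩ hs hs.1
  have hpos : 0 < α * c / (2 * p) := by positivity
  rw [lt_div_iff₀ hpos] at h5
  have h7 := Real.exp_pos (α * (Real.log (- F s) - p / 2 * Real.log (q s)))
  have h8 : Φ s = Real.exp (α * (Real.log (- F s) - p / 2 * Real.log (q s)))
    - (α * c / (2 * p)) * Real.log (q s) := rfl
  nlinarith

theorem ptD_static {G m2 C : ℝ} {N : ℕ} (hG : 0 < G) (hm : 0 ≤ m2) (hC : 0 < C)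
    (h : C * (G ^ 2) ^ N ≤ m2 ^ (N + 1)) :
    C ^ ((1 : ℝ) / (N + 1)) ≤ m2 / G ^ 2 * G ^ ((2 : ℝ) / (N + 1)) := by
  have hN : (N : ℝ) + 1 ≠ 0 := by positivity
  refine le_of_pow_le_pow_left₀ (n := N + 1) (by omega) (by positivity) ?_
  rw [← Real.rpow_natCast, ← Real.rpow_mul hC.le, mul_pow, ← Real.rpow_natCast (G ^ _), ← Real.rpow_mul hG.le]
  push_cast
  rw [div_mul_cancel₀ _ hN, div_mul_cancel₀ _ hN, Real.rpow_one, div_pow, div_mul_eq_mul_div,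
    le_div_iff₀ (by positivity), Real.rpow_two, pow_succ (G ^ 2), ← mul_assoc]
  gcongr

theorem ptD_grad_inner {n : ℕ} (f : EuclideanSpace ℝ (Fin n) → ℝ) (x y : EuclideanSpace ℝ (Fin n)) :
    ⟪gradient f x, y⟫ = fderiv ℝ f x y := by
  rw [gradient, InnerProductSpace.toDual_symm_apply]

theorem ptD_grad_hom {n : ℕ} {f : EuclideanSpace ℝ (Fin n) → ℝ} (hf : Differentiable ℝ f) (p : ℕ)
    (hhom : ∀ t : ℝ, 0 < t → ∀ x, f (t • x) = t ^ (p + 1) * f x) (t : ℝ) (ht : 0 < t)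
    (x : EuclideanSpace ℝ (Fin n)) :
    gradient f (t • x) = t ^ p • gradient f x := by
  rw [gradient, gradient, ptD_fderiv_hom hf p hhom t ht x, map_smul]

theorem ptD_hess {n : ℕ} {f : EuclideanSpace ℝ (Fin n) → ℝ} (hf : ContDiff ℝ ((⊤ : ℕ∞) : WithTop ℕ∞) f) (p : ℕ)
    (hhom : ∀ t : ℝ, 0 < t → ∀ x, f (t • x) = t ^ (p + 1) * f x) (x : EuclideanSpace ℝ (Fin n)) :
    Continuous (gradient f) ∧ fderiv ℝ (gradient f) x x = (p : ℝ) • gradient f x := by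
  have hd : Differentiable ℝ f := hf.differentiable (by simp)
  have hfd : ContDiff ℝ ((⊤ : ℕ∞) : WithTop ℕ∞) (fderiv ℝ f) := hf.fderiv_right (by simp)
  have hgd : Differentiable ℝ (gradient f) := by
    have h1 : Differentiable ℝ (fderiv ℝ f) := hfd.differentiable (by simp)
    have h2 : Differentiable ℝ fun y => (InnerProductSpace.toDual ℝ (EuclideanSpace ℝ (Fin n))).symm.toContinuousLinearEquiv.toContinuousLinearMap (fderiv ℝ f y) :=
      (ContinuousLinearMap.differentiable _).comp h1
    exact h2
  refine ⟨hgd.continuous, ?_⟩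
  have h1 : HasDerivAt (fun t : ℝ => gradient f (t • x)) (fderiv ℝ (gradient f) x x) 1 := by
    have hd : HasDerivAt (fun t : ℝ => t • x) x 1 := by
      simpa using (hasDerivAt_id (1 : ℝ)).smul_const x
    have hx : HasFDerivAt (gradient f) (fderiv ℝ (gradient f) x) ((1 : ℝ) • x) := by
      rw [one_smul]; exact (hgd x).hasFDerivAt
    exact hx.comp_hasDerivAt (1 : ℝ) hd
  have h2 : HasDerivAt (fun t : ℝ => gradient f (t • x)) ((p : ℝ) • gradient f x) 1 := by
    have h3 : HasDerivAt (fun t : ℝ => t ^ p • gradient f x) ((p : ℝ) • gradient f x) 1 := by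
      simpa using (hasDerivAt_pow p (1 : ℝ)).smul_const (gradient f x)
    refine h3.congr_of_eventuallyEq ?_
    filter_upwards [lt_mem_nhds (zero_lt_one : (0 : ℝ) < 1)] with t ht
    exact ptD_grad_hom hd p hhom t ht x
  exact h1.unique h2


theorem homogeneous_secant_limit_is_eigenvector_of_hessian
    {n : ℕ} (hn : 2 ≤ n)
    (f : EuclideanSpace ℝ (Fin n) → ℝ)
    (hfan : AnalyticOnNhd ℝ f Set.univ)
    (p : ℕ) (hp : 2 ≤ p)
    (hhom : ∀ t : ℝ, 0 ≤ t → ∀ x : EuclideanSpace ℝ (Fin n), f (t • x) = t ^ p * f x)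
    (L : ℝ) (hL : 0 < L)
    (γ : ℝ → EuclideanSpace ℝ (Fin n))
    (hγreg : ∀ s ∈ Set.Ico (0 : ℝ) L, gradient f (γ s) ≠ 0)
    (hγode : ∀ s ∈ Set.Ico (0 : ℝ) L,
      HasDerivAt γ (‖gradient f (γ s)‖⁻¹ • gradient f (γ s)) s)
    (hfneg : f (γ 0) < 0)
    (hfmono : StrictMonoOn (fun s => f (γ s)) (Set.Ico (0 : ℝ) L))
    (hγlim : Tendsto γ (𝓝[<] L) (𝓝 0))
    (ν : EuclideanSpace ℝ (Fin n)) (hν1 : ‖ν‖ = 1)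
    (hνlim : Tendsto (fun s => ‖γ s‖⁻¹ • γ s) (𝓝[<] L) (𝓝 ν)) :
    f ν ≠ 0 ∧
    fderiv ℝ (gradient f) ν ν = (((p : ℝ) * ((p : ℝ) - 1)) * f ν) • ν ∧
    ((p : ℝ) * ((p : ℝ) - 1)) * f ν ≠ 0 := by
  have hf : ContDiff ℝ ((⊤ : ℕ∞) : WithTop ℕ∞) f := contDiff_iff_contDiffAt.2 fun x => (hfan x trivial).contDiffAt
  have hd : Differentiable ℝ f := hf.differentiable (by simp)
  obtain ⟨p, rfl⟩ : ∃ m, p = m + 1 := ⟨p - 1, by omega⟩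
  have hhom' : ∀ t : ℝ, 0 < t → ∀ x, f (t • x) = t ^ (p + 1) * f x := fun t ht x => hhom t ht.le x
  have hf0 : f 0 = 0 := by
    have := hhom 0 le_rfl 0
    simpa using this
  obtain ⟨hgc, hhess⟩ := ptD_hess hf p hhom' ν
  have hFlim : Tendsto (fun s => f (γ s)) (𝓝[<] L) (𝓝 0) := by
    have := (hf.continuous.tendsto 0).comp hγlim
    rwa [hf0] at this
  have hFneg : ∀ s ∈ Set.Ico (0 : ℝ) L, f (γ s) < 0 := by
    intro s hs
    obtain ⟨s1, h1, h2⟩ := exists_between hs.2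
    have hs1 : s1 ∈ Set.Ico (0 : ℝ) L := ⟨hs.1.trans h1.le, h2⟩
    refine lt_of_lt_of_le (hfmono hs hs1 h1) (ge_of_tendsto hFlim ?_)
    filter_upwards [Ioo_mem_nhdsLT h2] with s2 hs2
    exact (hfmono hs1 ⟨hs1.1.trans hs2.1.le, hs2.2⟩ hs2.1).le
  have hγ0 : ∀ s ∈ Set.Ico (0 : ℝ) L, 0 < ‖γ s‖ := by
    intro s hs
    rw [norm_pos_iff]
    intro h
    have := hFneg s hs
    rw [h, hf0] at this
    exact lt_irrefl _ this
  let u : ℝ → EuclideanSpace ℝ (Fin n) := fun s => ‖γ s‖⁻¹ • γ s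
  have hγu : ∀ s ∈ Set.Ico (0 : ℝ) L, γ s = ‖γ s‖ • u s := by
    intro s hs
    simp only [u]
    rw [smul_smul, mul_inv_cancel₀ (hγ0 s hs).ne', one_smul]
  have hFu : ∀ s ∈ Set.Ico (0 : ℝ) L, f (γ s) = ‖γ s‖ ^ (p + 1) * f (u s) := by
    intro s hs
    conv_lhs => rw [hγu s hs]
    exact hhom' _ (hγ0 s hs) _
  have hgu : ∀ s ∈ Set.Ico (0 : ℝ) L, ‖gradient f (γ s)‖ = ‖γ s‖ ^ p * ‖gradient f (u s)‖ := by
    intro s hs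
    conv_lhs => rw [hγu s hs]
    rw [ptD_grad_hom hd p hhom' _ (hγ0 s hs), norm_smul, norm_pow, norm_norm]
  have hu1 : ∀ s ∈ Set.Ico (0 : ℝ) L, ‖u s‖ = 1 := by
    intro s hs
    simp only [u]
    rw [norm_smul, norm_inv, norm_norm, inv_mul_cancel₀ (hγ0 s hs).ne']
  have hfu : ∀ s ∈ Set.Ico (0 : ℝ) L, f (u s) < 0 := by
    intro s hs
    have h1 := hFneg s hs
    rw [hFu s hs] at h1
    have h2 := pow_pos (hγ0 s hs) (p + 1)
    by_contra! h3
    exact absurd h1 (not_lt.2 (mul_nonneg h2.le h3))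
  have hulim : Tendsto u (𝓝[<] L) (𝓝 ν) := hνlim
  have hev : ∀ᶠ s in 𝓝[<] L, s ∈ Set.Ico (0 : ℝ) L := by
    filter_upwards [Ioo_mem_nhdsLT hL] with s hs
    exact ⟨hs.1.le, hs.2⟩
  have key : ∀ α c : ℝ, 0 < α → 0 < c → (∀ᶠ s in 𝓝[<] L,
      c ≤ (‖gradient f (u s)‖ ^ 2 / (- f (u s)) ^ 2 - ((p : ℝ) + 1) ^ 2) * (- f (u s)) ^ α) → False := by
    intro α c hα hc hcond
    obtain ⟨s0, hs0, hsub⟩ := (mem_nhdsLT_iff_exists_Ico_subset).1 (hcond.and hev)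
    have hI : ∀ s ∈ Set.Ico s0 L, s ∈ Set.Ico (0 : ℝ) L := fun s hs => (hsub hs).2
    refine ptD_dyn s0 L hs0 (fun s => f (γ s)) (fun s => ‖gradient f (γ s)‖) (fun s => ‖γ s‖ ^ 2) ((p : ℝ) + 1) α c
      (by positivity) hα hc (fun s hs => hFneg s (hI s hs)) (fun s hs => pow_pos (hγ0 s (hI s hs)) 2)
      (fun s hs => norm_pos_iff.2 (hγreg s (hI s hs))) ?_ ?_ ?_ ?_
    · intro s hs
      have h1 := (hd (γ s)).hasFDerivAt.comp_hasDerivAt s (hγode s (hI s hs))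
      refine h1.congr_deriv ?_
      rw [← ptD_grad_inner, inner_smul_right, real_inner_self_eq_norm_sq]
      have := norm_ne_zero_iff.2 (hγreg s (hI s hs))
      field_simp
    · intro s hs
      have h1 := (hγode s (hI s hs)).norm_sq
      refine h1.congr_deriv ?_
      rw [inner_smul_right, real_inner_comm, ptD_grad_inner, ptD_euler hd (p + 1) hhom']
      push_cast
      ring
    · intro s hs
      have h1 := (hsub hs).1
      have h2 := hI s hs
      have hr := hγ0 s h2
      have hG := hfu s h2
      refine h1.trans (le_of_eq ?_)
      rw [hFu s h2, hgu s h2]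
      congr 1
      · have hGne := hG.ne
        field_simp
        try ring
      · rw [Real.rpow_def_of_pos (by linarith), ← mul_neg, Real.log_mul (by positivity) (by linarith), Real.log_pow,
          Real.log_pow]
        congr 1
        push_cast
        ring
    · have := (hγlim.norm).pow 2
      simpa using this
  have hfν : f ν ≠ 0 := by
    intro hν0
    obtain ⟨N, C, hC, ε, hε, H⟩ := ptD_loj hf p hhom'
    have hGlim : Tendsto (fun s => - f (u s)) (𝓝[<] L) (𝓝 0) := by
      have := ((hf.continuous.tendsto ν).comp hulim).neg
      rwa [hν0, neg_zero] at this
    have hα : (0 : ℝ) < 2 / (N + 1) := by positivity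
    have hGα : Tendsto (fun s => ((p : ℝ) + 1) ^ 2 * (- f (u s)) ^ ((2 : ℝ) / (N + 1))) (𝓝[<] L) (𝓝 0) := by
      have := (hGlim.rpow_const (Or.inr hα.le)).const_mul (((p : ℝ) + 1) ^ 2)
      rwa [Real.zero_rpow hα.ne', mul_zero] at this
    have hC1 : 0 < C ^ ((1 : ℝ) / (N + 1)) := by positivity
    refine key (2 / (N + 1)) (C ^ ((1 : ℝ) / (N + 1)) / 2) hα (by positivity) ?_
    filter_upwards [hev, hGlim.eventually (gt_mem_nhds hε), hGα.eventually (gt_mem_nhds (half_pos hC1))]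
      with s hs h1 h2
    have h3 := hfu s hs
    have h4 := H (u s) (hu1 s hs) h3.ne (by rwa [abs_of_neg h3])
    rw [abs_of_neg h3] at h4
    have h5 := ptD_static (by linarith) (by positivity) hC h4
    rw [sub_mul]
    linarith
  have hle : ‖gradient f ν‖ ^ 2 ≤ (((p : ℝ) + 1) * f ν) ^ 2 := by
    by_contra! hlt
    have hflim : Tendsto (fun s => - f (u s)) (𝓝[<] L) (𝓝 (- f ν)) :=
      ((hf.continuous.tendsto ν).comp hulim).neg
    have hglim : Tendsto (fun s => ‖gradient f (u s)‖ ^ 2) (𝓝[<] L) (𝓝 (‖gradient f ν‖ ^ 2)) :=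
      (((hgc.tendsto ν).comp hulim).norm).pow 2
    have hG0 : 0 < - f ν := by
      have h1 : 0 ≤ - f ν := ge_of_tendsto hflim (hev.mono fun s hs => by linarith [hfu s hs])
      exact lt_of_le_of_ne h1 (Ne.symm (neg_ne_zero.2 hfν))
    have hlim := ((hglim.div (hflim.pow 2) (by positivity)).sub_const (((p : ℝ) + 1) ^ 2)).mul
      (hflim.rpow_const (p := 1) (Or.inr zero_le_one))
    have hpos : 0 < (‖gradient f ν‖ ^ 2 / (- f ν) ^ 2 - ((p : ℝ) + 1) ^ 2) * (- f ν) ^ (1 : ℝ) := by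
      rw [Real.rpow_one]
      refine mul_pos ?_ hG0
      rw [sub_pos, lt_div_iff₀ (by positivity)]
      nlinarith
    refine key 1 _ one_pos (half_pos hpos) ?_
    filter_upwards [hlim.eventually (lt_mem_nhds (half_lt_self hpos))] with s hs
    exact hs.le
  have heq : gradient f ν = (((p : ℝ) + 1) * f ν) • ν := by
    rw [← sub_eq_zero, ← norm_eq_zero, ← sq_eq_zero_iff]
    refine le_antisymm ?_ (sq_nonneg _)
    rw [norm_sub_sq_real, inner_smul_right, ptD_grad_inner, ptD_euler hd (p + 1) hhom', norm_smul, hν1, mul_one,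
      Real.norm_eq_abs, sq_abs]
    push_cast
    linarith
  have hp' : (p : ℝ) ≠ 0 := by
    have : 1 ≤ p := by omega
    positivity
  have hp1 : (p : ℝ) + 1 ≠ 0 := by positivity
  refine ⟨hfν, ?_, ?_⟩
  · rw [hhess, heq, smul_smul]
    congr 1
    push_cast
    ring
  · push_cast
    rw [add_sub_cancel_right]
    exact mul_ne_zero (mul_ne_zero hp1 hp') hfν
end

section
/- If γ is non-oscillating at O, then with m and β as in the Kurdyka–Mostowski–Parusiński expansion along γ, the number m·β is an asymptotic critical value of the function g(x) = |x|^{1−m}·|∇f(x)|, witnessed along γ: g(x) → mβ and |x|·|∇g(x)| → 0 as x → O along γ. -/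
open scoped RealInnerProductSpace Topology
open Filter

section helpers
variable {n : ℕ}

theorem grad_inner' (f : EuclideanSpace ℝ (Fin n) → ℝ) (x v : EuclideanSpace ℝ (Fin n)) :
    ⟪gradient f x, v⟫ = fderiv ℝ f x v := by
  simp [gradient]

theorem grad_analytic {f : EuclideanSpace ℝ (Fin n) → ℝ} {x : EuclideanSpace ℝ (Fin n)}
    (h : AnalyticAt ℝ f x) : AnalyticAt ℝ (gradient f) x := by
  let T : (EuclideanSpace ℝ (Fin n) →L[ℝ] ℝ) →ₗ[ℝ] EuclideanSpace ℝ (Fin n) :=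
    { toFun := fun l => (InnerProductSpace.toDual ℝ (EuclideanSpace ℝ (Fin n))).symm l
      map_add' := fun a b => map_add _ a b
      map_smul' := fun c a => by simp }
  have h2 := (LinearMap.toContinuousLinearMap T).analyticAt (fderiv ℝ f x)
  exact h2.comp h.fderiv

theorem hess_symm {f : EuclideanSpace ℝ (Fin n) → ℝ} {x : EuclideanSpace ℝ (Fin n)}
    (h : AnalyticAt ℝ f x) (u v : EuclideanSpace ℝ (Fin n)) :
    ⟪fderiv ℝ (gradient f) x u, v⟫ = ⟪fderiv ℝ (gradient f) x v, u⟫ := by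
  have key : ∀ u v, ⟪fderiv ℝ (gradient f) x u, v⟫ = fderiv ℝ (fderiv ℝ f) x u v := by
    intro u v
    have h1 : HasFDerivAt (fun y => fderiv ℝ f y v) ((fderiv ℝ (fderiv ℝ f) x).flip v) x := by
      have := h.fderiv.differentiableAt.hasFDerivAt.clm_apply (hasFDerivAt_const v x)
      have e : fderiv ℝ f x ∘SL (0 : EuclideanSpace ℝ (Fin n) →L[ℝ] EuclideanSpace ℝ (Fin n)) +
          (fderiv ℝ (fderiv ℝ f) x).flip v = (fderiv ℝ (fderiv ℝ f) x).flip v := by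
        ext; simp
      rw [e] at this
      exact this
    have h2 := (grad_analytic h).differentiableAt.hasFDerivAt.inner ℝ (hasFDerivAt_const v x)
    simp only [grad_inner'] at h2
    have h3 := congrArg (fun l => l u) (h1.unique h2)
    simp at h3
    exact h3.symm
  rw [key, key]
  exact (h.contDiffAt (n := ⊤)).isSymmSndFDerivAt (by simp) u v

theorem le_zero_of_deriv {h h' : ℝ → ℝ} {L : ℝ} (hd : ∀ᶠ s in 𝓝[<] L, HasDerivAt h (h' s) s)
    (hp : ∀ᶠ s in 𝓝[<] L, 0 ≤ h' s) (hl : Tendsto h (𝓝[<] L) (𝓝 0)) :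
    ∀ᶠ s in 𝓝[<] L, h s ≤ 0 := by
  obtain ⟨a, ha, haL⟩ := (mem_nhdsLT_iff_exists_Ioo_subset).1 (hd.and hp)
  have hmono : MonotoneOn h (Set.Ioo a L) := by
    apply monotoneOn_of_deriv_nonneg (convex_Ioo a L)
    · exact fun s hs => (haL hs).1.continuousAt.continuousWithinAt
    · rw [interior_Ioo]; exact fun s hs => (haL hs).1.differentiableAt.differentiableWithinAt
    · rw [interior_Ioo]; intro s hs; rw [(haL hs).1.deriv]; exact (haL hs).2
  filter_upwards [Ioo_mem_nhdsLT ha] with s hs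
  apply ge_of_tendsto hl
  filter_upwards [Ioo_mem_nhdsLT hs.2] with t ht
  exact hmono hs ⟨hs.1.trans ht.1, ht.2⟩ ht.1.le

theorem tendsto_of_comp {u : ℝ → ℝ} {l : Filter ℝ} {T : ℝ}
    (hc : ∀ c, (∀ᶠ s in l, u s ≤ c) ∨ (∀ᶠ s in l, c ≤ u s))
    (h1 : ∀ c, T < c → ¬ ∀ᶠ s in l, c ≤ u s) (h2 : ∀ c, c < T → ¬ ∀ᶠ s in l, u s ≤ c) :
    Tendsto u l (𝓝 T) := by
  rw [tendsto_order]
  constructor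
  · intro a ha
    obtain ⟨c, hac, hcT⟩ := exists_between ha
    filter_upwards [(hc c).resolve_left (h2 c hcT)] with s hs
    linarith
  · intro a ha
    obtain ⟨c, hac, hcT⟩ := exists_between ha
    filter_upwards [(hc c).resolve_right (h1 c hac)] with s hs
    linarith

theorem exists_lim_of_comp {u : ℝ → ℝ} {l : Filter ℝ} [l.NeBot] {C : ℝ}
    (hc : ∀ c, (∀ᶠ s in l, u s ≤ c) ∨ (∀ᶠ s in l, c ≤ u s))
    (hb : ∀ᶠ s in l, |u s| ≤ C) : ∃ T, Tendsto u l (𝓝 T) := by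
  have hb' : ∀ᶠ s in l, u s ∈ Set.Icc (-C) C := by
    filter_upwards [hb] with s hs using abs_le.1 hs
  obtain ⟨T, -, hT⟩ := isCompact_Icc.exists_mapClusterPt (f := l) (u := u)
    (le_principal_iff.2 hb')
  refine ⟨T, tendsto_of_comp hc ?_ ?_⟩
  · intro c hcT h
    obtain ⟨s, h1, h2⟩ := ((hT.frequently (Iio_mem_nhds hcT)).and_eventually h).exists
    exact absurd h1 (not_lt.2 h2)
  · intro c hcT h
    obtain ⟨s, h1, h2⟩ := ((hT.frequently (Ioi_mem_nhds hcT)).and_eventually h).exists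
    exact absurd h1 (not_lt.2 h2)

theorem sign_of_osc {γ : ℝ → EuclideanSpace ℝ (Fin n)} {L : ℝ}
    (hcont : ∀ᶠ s in 𝓝[<] L, ContinuousAt γ s) (hγlim : Tendsto γ (𝓝[<] L) (𝓝 0))
    (hosc : ∀ g : EuclideanSpace ℝ (Fin n) → ℝ, AnalyticAt ℝ g 0 →
      (∀ᶠ s in 𝓝[<] L, g (γ s) = 0) ∨ (∀ᶠ s in 𝓝[<] L, g (γ s) ≠ 0))
    (A : EuclideanSpace ℝ (Fin n) → ℝ) (hA : AnalyticAt ℝ A 0) :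
    (∀ᶠ s in 𝓝[<] L, A (γ s) ≤ 0) ∨ (∀ᶠ s in 𝓝[<] L, 0 ≤ A (γ s)) := by
  rcases hosc A hA with h | h
  · left; filter_upwards [h] with s hs using hs.le
  have h1 : ∀ᶠ s in 𝓝[<] L, ContinuousAt A (γ s) :=
    hγlim.eventually (hA.eventually_analyticAt.mono fun _ h => h.continuousAt)
  obtain ⟨a, ha, haL⟩ := (mem_nhdsLT_iff_exists_Ioo_subset).1 ((hcont.and h1).and h)
  have hco : ContinuousOn (fun s => A (γ s)) (Set.Ioo a L) := fun s hs =>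
    (ContinuousAt.comp (haL hs).1.2 (haL hs).1.1).continuousWithinAt
  by_contra! hcon
  obtain ⟨hc1, hc2⟩ := hcon
  obtain ⟨s, hs1, hs⟩ := (hc1.and_eventually (Ioo_mem_nhdsLT ha)).exists
  obtain ⟨t, ht1, ht⟩ := (hc2.and_eventually (Ioo_mem_nhdsLT ha)).exists
  obtain ⟨z, hz, hz0⟩ := isPreconnected_Ioo.intermediate_value ht hs hco
    (⟨ht1.le, hs1.le⟩ : (0:ℝ) ∈ Set.Icc _ _)
  exact (haL hz).2 hz0

theorem comp_of_osc {γ : ℝ → EuclideanSpace ℝ (Fin n)} {L : ℝ}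
    (hcont : ∀ᶠ s in 𝓝[<] L, ContinuousAt γ s) (hγlim : Tendsto γ (𝓝[<] L) (𝓝 0))
    (hosc : ∀ g : EuclideanSpace ℝ (Fin n) → ℝ, AnalyticAt ℝ g 0 →
      (∀ᶠ s in 𝓝[<] L, g (γ s) = 0) ∨ (∀ᶠ s in 𝓝[<] L, g (γ s) ≠ 0))
    {A B A1 : EuclideanSpace ℝ (Fin n) → ℝ} (hA : AnalyticAt ℝ A 0)
    (hB : AnalyticAt ℝ B 0) (hA1 : AnalyticAt ℝ A1 0) {u w : ℝ → ℝ} {q : ℕ} (hq : q ≠ 0)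
    (hu : ∀ᶠ s in 𝓝[<] L, u s = A (γ s) * w s ∧ 0 ≤ w s)
    (hBp : ∀ᶠ s in 𝓝[<] L, 0 < B (γ s))
    (hpow : ∀ᶠ s in 𝓝[<] L, (u s ^ 2) ^ q * B (γ s) = A1 (γ s)) (c : ℝ) :
    (∀ᶠ s in 𝓝[<] L, u s ≤ c) ∨ (∀ᶠ s in 𝓝[<] L, c ≤ u s) := by
  have habs : (∀ᶠ s in 𝓝[<] L, |u s| ≤ |c|) ∨ (∀ᶠ s in 𝓝[<] L, |c| ≤ |u s|) := by
    have := sign_of_osc hcont hγlim hosc (fun x => A1 x - (c ^ 2) ^ q * B x)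
      (hA1.sub (analyticAt_const.mul hB))
    refine this.imp (fun h => ?_) (fun h => ?_)
    · filter_upwards [h, hBp, hpow] with s h1 h2 h3
      rw [← h3, ← sub_mul] at h1
      have h4 : (u s ^ 2) ^ q ≤ (c ^ 2) ^ q := by
        by_contra! h5
        nlinarith [mul_pos (sub_pos.2 h5) h2]
      exact sq_le_sq.1 ((pow_le_pow_iff_left₀ (by positivity) (by positivity) hq).1 h4)
    · filter_upwards [h, hBp, hpow] with s h1 h2 h3
      rw [← h3, ← sub_mul] at h1
      have h4 : (c ^ 2) ^ q ≤ (u s ^ 2) ^ q := by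
        by_contra! h5
        nlinarith [mul_pos (sub_pos.2 h5) h2]
      exact sq_le_sq.1 ((pow_le_pow_iff_left₀ (by positivity) (by positivity) hq).1 h4)
  rcases sign_of_osc hcont hγlim hosc A hA with h | h
  · have hs : ∀ᶠ s in 𝓝[<] L, u s ≤ 0 := by
      filter_upwards [h, hu] with s h1 h2
      rw [h2.1]; exact mul_nonpos_of_nonpos_of_nonneg h1 h2.2
    rcases le_or_gt 0 c with hc | hc
    · left; filter_upwards [hs] with s h1 using h1.trans hc
    · rcases habs with h1 | h1
      · right; filter_upwards [h1, hs] with s h1 h2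
        rw [abs_of_nonpos h2, abs_of_neg hc] at h1; linarith
      · left; filter_upwards [h1, hs] with s h1 h2
        rw [abs_of_nonpos h2, abs_of_neg hc] at h1; linarith
  · have hs : ∀ᶠ s in 𝓝[<] L, 0 ≤ u s := by
      filter_upwards [h, hu] with s h1 h2
      rw [h2.1]; exact mul_nonneg h1 h2.2
    rcases lt_or_ge c 0 with hc | hc
    · right; filter_upwards [hs] with s h1 using hc.le.trans h1
    · rcases habs with h1 | h1
      · left; filter_upwards [h1, hs] with s h1 h2
        rwa [abs_of_nonneg h2, abs_of_nonneg hc] at h1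
      · right; filter_upwards [h1, hs] with s h1 h2
        rwa [abs_of_nonneg h2, abs_of_nonneg hc] at h1

/-- derivative of the function `g`, up to the factor `‖x‖`. -/
theorem grad_g {f : EuclideanSpace ℝ (Fin n) → ℝ} {x : EuclideanSpace ℝ (Fin n)}
    (h : AnalyticAt ℝ f x) (hx : x ≠ 0) (hg : gradient f x ≠ 0) (m : ℝ)
    (v : EuclideanSpace ℝ (Fin n)) :
    ‖x‖ * ⟪gradient (fun x => ‖x‖ ^ ((1 : ℝ) - m) * ‖gradient f x‖) x, v⟫ =
      (1 - m) * (‖x‖ ^ ((1 : ℝ) - m) * ‖gradient f x‖) * (⟪x, v⟫ * ‖x‖⁻¹) +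
      ‖x‖ ^ (2 - m) * ⟪fderiv ℝ (gradient f) x (‖gradient f x‖⁻¹ • gradient f x), v⟫ := by
  have hxn : 0 < ‖x‖ := norm_pos_iff.2 hx
  have hgn : 0 < ‖gradient f x‖ := norm_pos_iff.2 hg
  have hl : HasDerivAt (fun t : ℝ => x + t • v) v 0 := by
    simpa using ((hasDerivAt_id (0:ℝ)).smul_const v).const_add x
  have h1 : HasDerivAt (fun t : ℝ => ‖x + t • v‖) (⟪x, v⟫ * ‖x‖⁻¹) 0 := by
    have := hl.norm_sq.sqrt (by simpa using hx)
    simp only [Real.sqrt_sq (norm_nonneg _)] at this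
    convert this using 1
    simp; field_simp
  have h2 : HasDerivAt (fun t : ℝ => gradient f (x + t • v)) (fderiv ℝ (gradient f) x v) 0 := by
    have h3 : HasFDerivAt (gradient f) (fderiv ℝ (gradient f) x) (x + (0:ℝ) • v) := by
      simpa using (grad_analytic h).differentiableAt.hasFDerivAt
    exact h3.comp_hasDerivAt (0:ℝ) hl
  have h3 : HasDerivAt (fun t : ℝ => ‖gradient f (x + t • v)‖)
      (⟪gradient f x, fderiv ℝ (gradient f) x v⟫ * ‖gradient f x‖⁻¹) 0 := by
    have := h2.norm_sq.sqrt (by simpa using hg)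
    simp only [Real.sqrt_sq (norm_nonneg _)] at this
    convert this using 1
    simp; field_simp
  have h4 := (h1.rpow_const (p := 1 - m) (Or.inl (by simpa using hx))).mul h3
  have hd : DifferentiableAt ℝ (fun x => ‖x‖ ^ ((1 : ℝ) - m) * ‖gradient f x‖) x := by
    apply DifferentiableAt.mul
    · exact (differentiableAt_id.norm ℝ hx).rpow_const (Or.inl hxn.ne')
    · exact (grad_analytic h).differentiableAt.norm ℝ hg
  have h5 : HasDerivAt (fun t : ℝ => ‖x + t • v‖ ^ ((1 : ℝ) - m) * ‖gradient f (x + t • v)‖)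
      (fderiv ℝ (fun x => ‖x‖ ^ ((1 : ℝ) - m) * ‖gradient f x‖) x v) 0 := by
    have h6 : HasFDerivAt (fun x => ‖x‖ ^ ((1 : ℝ) - m) * ‖gradient f x‖)
      (fderiv ℝ (fun x => ‖x‖ ^ ((1 : ℝ) - m) * ‖gradient f x‖) x) (x + (0:ℝ) • v) := by
      simpa using hd.hasFDerivAt
    exact h6.comp_hasDerivAt (0:ℝ) hl
  have h6 := h5.unique h4
  rw [grad_inner', h6]
  simp only [zero_smul, add_zero, map_smul, inner_smul_left]
  rw [hess_symm h (gradient f x) v, real_inner_comm (gradient f x)]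
  have e1 : ‖x‖ * ‖x‖ ^ (1 - m - 1) = ‖x‖ ^ (1 - m) := by
    rw [Real.rpow_sub_one hxn.ne']; field_simp
  have e2 : ‖x‖ ^ (2 - m) = ‖x‖ * ‖x‖ ^ (1 - m) := by
    rw [show 2 - m = (1 - m) + 1 by ring, Real.rpow_add_one hxn.ne', mul_comm]
  rw [e2, ← e1]
  simp
  ring

theorem lhop {r rd a ad : ℝ → ℝ} {L m T c : ℝ} (hm : 1 < m)
    (hr : ∀ᶠ s in 𝓝[<] L, 0 < r s) (hrd : ∀ᶠ s in 𝓝[<] L, HasDerivAt r (rd s) s)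
    (had : ∀ᶠ s in 𝓝[<] L, HasDerivAt a (ad s) s)
    (hrd1 : Tendsto rd (𝓝[<] L) (𝓝 (-1))) (hr0 : Tendsto r (𝓝[<] L) (𝓝 0))
    (ha0 : Tendsto a (𝓝[<] L) (𝓝 0))
    (har : Tendsto (fun s => a s * r s ^ (1 - m)) (𝓝[<] L) (𝓝 (-T)))
    (hc : (m - 1) * T < c) (h : ∀ᶠ s in 𝓝[<] L, c ≤ r s ^ (2 - m) * ad s) : False := by
  have hm1 : 0 < m - 1 := by linarith
  obtain ⟨k, hk1, hk2⟩ : ∃ k, T < k ∧ (m - 1) * k < c := by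
    obtain ⟨d, hd1, hd2⟩ := exists_between hc
    refine ⟨d / (m - 1), ?_, ?_⟩
    · rw [lt_div_iff₀ hm1]; linarith
    · rw [mul_div_cancel₀ _ hm1.ne']; exact hd2
  have h1 : ∀ᶠ s in 𝓝[<] L, HasDerivAt (fun s => a s + k * r s ^ (m - 1))
      (ad s + k * (rd s * (m - 1) * r s ^ (m - 1 - 1))) s := by
    filter_upwards [hr, hrd, had] with s h1 h2 h3
    exact h3.add ((h2.rpow_const (Or.inl h1.ne')).const_mul k)
  have h2 : Tendsto (fun s => a s + k * r s ^ (m - 1)) (𝓝[<] L) (𝓝 0) := by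
    have := ha0.add ((hr0.rpow_const (p := m - 1) (Or.inr hm1.le)).const_mul k)
    simpa [Real.zero_rpow hm1.ne'] using this
  have h3 : ∀ᶠ s in 𝓝[<] L, 0 < c + k * (m - 1) * rd s := by
    have := (hrd1.const_mul (k * (m - 1))).const_add c
    exact this.eventually (lt_mem_nhds (by linarith))
  have h4 := le_zero_of_deriv h1 (by
    filter_upwards [hr, h, h3] with s h1 h2 h3
    have e : ad s = r s ^ (m - 1 - 1) * (r s ^ (2 - m) * ad s) := by
      rw [← mul_assoc, ← Real.rpow_add h1]; ring_nf; simp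
    rw [e]
    have : 0 ≤ r s ^ (m - 1 - 1) * ((r s ^ (2 - m) * ad s) + k * (m - 1) * rd s) :=
      mul_nonneg (by positivity) (by linarith)
    linarith) h2
  have h5 : -T ≤ -k := by
    apply le_of_tendsto har
    filter_upwards [hr, h4] with s h1 h2
    have h3 : 0 < r s ^ (1 - m) := by positivity
    have e : r s ^ (m - 1) * r s ^ (1 - m) = 1 := by
      rw [← Real.rpow_add h1]; ring_nf; simp
    have := mul_nonpos_of_nonpos_of_nonneg h2 h3.le
    rw [add_mul, mul_assoc, e] at this
    linarith
  linarith

theorem claim_one_upper {r rd φ F : ℝ → ℝ} {L m β c : ℝ} (hm : 1 < m) (hβ : 0 < β)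
    (hr : ∀ᶠ s in 𝓝[<] L, 0 < r s) (hrd : ∀ᶠ s in 𝓝[<] L, HasDerivAt r (rd s) s)
    (hFd : ∀ᶠ s in 𝓝[<] L, HasDerivAt F (φ s) s)
    (hrd1 : ∀ᶠ s in 𝓝[<] L, -1 ≤ rd s) (hr0 : Tendsto r (𝓝[<] L) (𝓝 0))
    (hw : Tendsto (fun s => F s / r s ^ m) (𝓝[<] L) (𝓝 (-β)))
    (hc : m * β < c) (h : ∀ᶠ s in 𝓝[<] L, c ≤ r s ^ (1 - m) * φ s) : False := by
  have hm0 : 0 < m := by linarith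
  have hmβ : 0 < m * β := by positivity
  obtain ⟨k, hk1, hk2⟩ := exists_between ((one_lt_div hmβ).2 hc)
  set w : ℝ → ℝ := fun s => -(F s / r s ^ m) / β with hwdef
  have hw1 : Tendsto w (𝓝[<] L) (𝓝 1) := by
    have := hw.neg.div_const β
    rwa [neg_neg, div_self hβ.ne'] at this
  have hwp : ∀ᶠ s in 𝓝[<] L, 0 < w s := hw1.eventually (lt_mem_nhds one_pos)
  have hFw : ∀ᶠ s in 𝓝[<] L, -F s / β = w s * r s ^ m := by
    filter_upwards [hr] with s h1
    have : r s ^ m ≠ 0 := by positivity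
    simp only [hwdef]; field_simp
  have hρ : ∀ᶠ s in 𝓝[<] L, (-F s / β) ^ (1 / m) = w s ^ (1 / m) * r s := by
    filter_upwards [hr, hwp, hFw] with s h1 h2 h3
    rw [h3, Real.mul_rpow h2.le (by positivity), ← Real.rpow_mul h1.le,
      mul_one_div_cancel hm0.ne', Real.rpow_one]
  have hd : ∀ᶠ s in 𝓝[<] L, HasDerivAt (fun s => k * r s - (-F s / β) ^ (1 / m))
      (k * rd s - (-φ s / β) * (1 / m) * (-F s / β) ^ (1 / m - 1)) s := by
    filter_upwards [hr, hrd, hFd, hwp, hFw] with s h1 h2 h3 h4 h5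
    have h6 : 0 < -F s / β := by rw [h5]; positivity
    exact (h2.const_mul k).sub ((h3.neg.div_const β).rpow_const (Or.inl h6.ne'))
  have hwk : Tendsto (fun s => w s ^ (1 / m)) (𝓝[<] L) (𝓝 1) := by
    simpa using hw1.rpow_const (p := 1 / m) (Or.inl one_ne_zero)
  have hwk' : Tendsto (fun s => (c / (m * β)) * w s ^ (1 / m - 1)) (𝓝[<] L)
      (𝓝 (c / (m * β))) := by
    simpa using (hw1.rpow_const (p := 1 / m - 1) (Or.inl one_ne_zero)).const_mul (c / (m * β))
  have hlim : Tendsto (fun s => k * r s - (-F s / β) ^ (1 / m)) (𝓝[<] L) (𝓝 0) := by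
    have h1 : Tendsto (fun s => k * r s - w s ^ (1 / m) * r s) (𝓝[<] L) (𝓝 0) := by
      simpa using (hr0.const_mul k).sub (hwk.mul hr0)
    refine h1.congr' ?_
    filter_upwards [hρ] with s h2
    rw [h2]
  have h4 := le_zero_of_deriv hd (by
    filter_upwards [hr, hwp, hFw, hrd1, h, hwk'.eventually (lt_mem_nhds hk2)]
      with s h1 h2 h3 h4 h5 h6
    have e : (-F s / β) ^ (1 / m - 1) = w s ^ (1 / m - 1) * r s ^ (1 - m) := by
      rw [h3, Real.mul_rpow h2.le (by positivity), ← Real.rpow_mul h1.le]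
      congr 2; field_simp
    rw [e]
    have e2 : (-φ s / β) * (1 / m) * (w s ^ (1 / m - 1) * r s ^ (1 - m)) =
      - (w s ^ (1 / m - 1) * ((r s ^ (1 - m) * φ s) / (m * β))) := by field_simp
    rw [e2]
    have h7 : w s ^ (1 / m - 1) * (c / (m * β)) ≤
        w s ^ (1 / m - 1) * ((r s ^ (1 - m) * φ s) / (m * β)) := by gcongr
    nlinarith) hlim
  have h5 : k ≤ 1 := by
    apply ge_of_tendsto hwk
    filter_upwards [hr, h4, hρ] with s h1 h2 h3
    rw [h3, ← sub_mul] at h2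
    by_contra! h6
    nlinarith [mul_pos (sub_pos.2 h6) h1]
  linarith
end helpers

/-- `m·β` is an asymptotic critical value of `g(x) = |x|^{1-m}|∇f(x)|`
witnessed along the non-oscillating trajectory. -/
theorem m_beta_is_asymptotic_critical_value
    {n : ℕ} (hn : 2 ≤ n)
    (U : Set (EuclideanSpace ℝ (Fin n))) (hUopen : IsOpen U)
    (hOU : (0 : EuclideanSpace ℝ (Fin n)) ∈ U)
    (f : EuclideanSpace ℝ (Fin n) → ℝ)
    (hfan : AnalyticOnNhd ℝ f U) (hf0 : f 0 = 0) (hgf0 : gradient f 0 = 0)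
    (L : ℝ) (hL : 0 < L)
    (γ : ℝ → EuclideanSpace ℝ (Fin n))
    (hγU : ∀ s ∈ Set.Ico (0 : ℝ) L, γ s ∈ U)
    (hγreg : ∀ s ∈ Set.Ico (0 : ℝ) L, gradient f (γ s) ≠ 0)
    (hγode : ∀ s ∈ Set.Ico (0 : ℝ) L,
      HasDerivAt γ (‖gradient f (γ s)‖⁻¹ • gradient f (γ s)) s)
    (hfneg : f (γ 0) < 0)
    (hfmono : StrictMonoOn (fun s => f (γ s)) (Set.Ico (0 : ℝ) L))
    (hγlim : Tendsto γ (𝓝[<] L) (𝓝 0))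
    (hosc : ∀ g : EuclideanSpace ℝ (Fin n) → ℝ, AnalyticAt ℝ g 0 →
      (∀ᶠ s in 𝓝[<] L, g (γ s) = 0) ∨ (∀ᶠ s in 𝓝[<] L, g (γ s) ≠ 0))
    (m : ℝ) (hm : 1 < m) (hmQ : ∃ q : ℚ, m = (q : ℝ)) (β : ℝ) (hβ : 0 < β)
    (hKMP1 : (fun s => f (γ s) + β * ‖γ s‖ ^ m) =o[𝓝[<] L] fun s => ‖γ s‖ ^ m)
    (hKMP2 : (fun s => ⟪gradient f (γ s), ‖γ s‖⁻¹ • γ s⟫ + m * β * ‖γ s‖ ^ (m - 1))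
      =o[𝓝[<] L] fun s => ‖γ s‖ ^ (m - 1))
    :
    Tendsto (fun s => ‖γ s‖ ^ ((1 : ℝ) - m) * ‖gradient f (γ s)‖) (𝓝[<] L) (𝓝 (m * β)) ∧
    Tendsto (fun s =>
        ‖γ s‖ * ‖gradient (fun x => ‖x‖ ^ ((1 : ℝ) - m) * ‖gradient f x‖) (γ s)‖)
      (𝓝[<] L) (𝓝 0) := by
  classical
  have hE : ∀ᶠ s in 𝓝[<] L, s ∈ Set.Ico (0:ℝ) L := Ico_mem_nhdsLT hL
  have hcont : ∀ᶠ s in 𝓝[<] L, ContinuousAt γ s := by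
    filter_upwards [hE] with s hs using (hγode s hs).continuousAt
  have hf0an : AnalyticAt ℝ f 0 := hfan 0 hOU
  have hgan := grad_analytic hf0an
  have hφ : ∀ᶠ s in 𝓝[<] L, 0 < ‖gradient f (γ s)‖ := by
    filter_upwards [hE] with s hs using norm_pos_iff.2 (hγreg s hs)
  have hr : ∀ᶠ s in 𝓝[<] L, 0 < ‖γ s‖ := by
    filter_upwards [hE] with s hs
    rw [norm_pos_iff]
    intro h0
    apply hγreg s hs
    rw [h0, hgf0]
  have hr0 : Tendsto (fun s => ‖γ s‖) (𝓝[<] L) (𝓝 0) := by simpa using hγlim.norm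
  obtain ⟨q, hq⟩ := hmQ
  have hq0 : 0 < q := by
    have : (0:ℝ) < q := by rw [← hq]; linarith
    exact_mod_cast this
  obtain ⟨N, p, hN, hNp⟩ : ∃ N p : ℕ, N ≠ 0 ∧ m * N = p := by
    refine ⟨q.den, q.num.toNat, q.den_ne_zero, ?_⟩
    have h1 : ((q.num.toNat : ℤ) : ℝ) = (q.num : ℝ) := by
      rw [Int.toNat_of_nonneg (Rat.num_pos.2 hq0).le]
    have h2 : ((q * q.den : ℚ) : ℝ) = ((q.num : ℚ) : ℝ) := by rw [Rat.mul_den_eq_num]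
    push_cast at h1 h2
    rw [hq, h1, h2]
  have hpow : ∀ r : ℝ, 0 < r → ((r ^ (1 - m)) ^ 2) ^ N * (r ^ 2) ^ p = (r ^ 2) ^ N := by
    intro r hr
    simp only [← Real.rpow_natCast, ← Real.rpow_mul hr.le, ← Real.rpow_add hr]
    congr 1
    rw [← hNp]; push_cast; ring
  -- the derivatives
  set rd : ℝ → ℝ := fun s => ⟪γ s, ‖gradient f (γ s)‖⁻¹ • gradient f (γ s)⟫ * ‖γ s‖⁻¹ with hrddef
  have hrd : ∀ᶠ s in 𝓝[<] L, HasDerivAt (fun s => ‖γ s‖) (rd s) s := by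
    filter_upwards [hE, hr] with s hs h1
    have := (hγode s hs).norm_sq.sqrt (by positivity)
    simp only [Real.sqrt_sq (norm_nonneg _)] at this
    convert this using 1
    simp only [hrddef]; field_simp
  have hFd : ∀ᶠ s in 𝓝[<] L, HasDerivAt (fun s => f (γ s)) ‖gradient f (γ s)‖ s := by
    filter_upwards [hE, hφ] with s hs h1
    have := (hfan _ (hγU s hs)).differentiableAt.hasFDerivAt.comp_hasDerivAt s (hγode s hs)
    rw [← grad_inner', inner_smul_right, real_inner_self_eq_norm_sq] at this
    have e : ‖gradient f (γ s)‖⁻¹ * ‖gradient f (γ s)‖ ^ 2 = ‖gradient f (γ s)‖ := by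
      field_simp
    rw [e] at this
    exact this
  have hνn : ∀ᶠ s in 𝓝[<] L, ‖‖gradient f (γ s)‖⁻¹ • gradient f (γ s)‖ = 1 := by
    filter_upwards [hφ] with s h1
    rw [norm_smul, norm_inv, norm_norm, inv_mul_cancel₀ h1.ne']
  have hrd1 : ∀ᶠ s in 𝓝[<] L, -1 ≤ rd s := by
    filter_upwards [hr, hνn] with s h1 h2
    have h3 := abs_real_inner_le_norm (γ s) (‖gradient f (γ s)‖⁻¹ • gradient f (γ s))
    rw [h2, mul_one] at h3
    have h4 := (abs_le.1 h3).1
    simp only [hrddef]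
    rw [← div_eq_mul_inv, le_div_iff₀ h1]
    linarith
  have hw : Tendsto (fun s => f (γ s) / ‖γ s‖ ^ m) (𝓝[<] L) (𝓝 (-β)) := by
    have h1 := hKMP1.tendsto_div_nhds_zero.sub_const β
    rw [zero_sub] at h1
    refine h1.congr' ?_
    filter_upwards [hr] with s h1
    have : ‖γ s‖ ^ m ≠ 0 := by positivity
    field_simp; ring
  have hK2 : Tendsto (fun s => rd s * (‖γ s‖ ^ ((1 : ℝ) - m) * ‖gradient f (γ s)‖)) (𝓝[<] L)
      (𝓝 (-(m * β))) := by
    have h1 := hKMP2.tendsto_div_nhds_zero.sub_const (m * β)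
    rw [zero_sub] at h1
    refine h1.congr' ?_
    filter_upwards [hr, hφ] with s h1 h2
    have h3 : ‖γ s‖ ^ (m - 1) ≠ 0 := by positivity
    have h4 : ‖γ s‖ ^ (1 - m) = (‖γ s‖ ^ (m - 1))⁻¹ := by
      rw [← Real.rpow_neg h1.le]; ring_nf
    simp only [hrddef, inner_smul_right, real_inner_comm (γ s) (gradient f (γ s))]
    rw [h4]
    field_simp; ring
  -- analyticity
  have han_r : AnalyticAt ℝ (fun x : EuclideanSpace ℝ (Fin n) => ‖x‖ ^ 2) 0 :=
    ((contDiff_norm_sq ℝ).contDiffAt (n := ⊤)).analyticAt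
  have han_φ : AnalyticAt ℝ (fun x => ‖gradient f x‖ ^ 2) 0 :=
    AnalyticAt.comp (g := fun x : EuclideanSpace ℝ (Fin n) => ‖x‖ ^ 2)
      ((contDiff_norm_sq ℝ).contDiffAt (n := ⊤)).analyticAt hgan
  have han_v : ∀ (v : EuclideanSpace ℝ (Fin n)) (X : EuclideanSpace ℝ (Fin n) →
      EuclideanSpace ℝ (Fin n)), AnalyticAt ℝ X 0 → AnalyticAt ℝ (fun x => ⟪X x, v⟫) 0 := by
    intro v X hX
    have h1 := AnalyticAt.comp ((innerSL ℝ v).analyticAt (X 0)) hX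
    refine h1.congr (Eventually.of_forall fun x => ?_)
    simp [real_inner_comm]
  -- first claim
  have hG : Tendsto (fun s => ‖γ s‖ ^ ((1 : ℝ) - m) * ‖gradient f (γ s)‖) (𝓝[<] L)
      (𝓝 (m * β)) := by
    apply tendsto_of_comp
    · apply comp_of_osc hcont hγlim hosc (A := fun _ => 1) (B := fun x => (‖x‖ ^ 2) ^ p)
        (A1 := fun x => (‖gradient f x‖ ^ 2) ^ N * (‖x‖ ^ 2) ^ N) analyticAt_const
        (han_r.pow p) ((han_φ.pow N).mul (han_r.pow N))
        (w := fun s => ‖γ s‖ ^ ((1 : ℝ) - m) * ‖gradient f (γ s)‖) hN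
      · filter_upwards [] with s
        exact ⟨by simp, by positivity⟩
      · filter_upwards [hr] with s h1
        positivity
      · filter_upwards [hr] with s h1
        rw [← hpow _ h1]; ring
    · intro c hc h
      exact claim_one_upper hm hβ hr hrd hFd hrd1 hr0 hw hc h
    · intro c hc h
      have : m * β ≤ c := by
        rw [← neg_le_neg_iff]
        apply ge_of_tendsto hK2
        filter_upwards [h, hrd1] with s h1 h2
        have : 0 ≤ ‖γ s‖ ^ ((1 : ℝ) - m) * ‖gradient f (γ s)‖ := by positivity
        nlinarith
      linarith
  refine ⟨hG, ?_⟩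
  have hmβ : 0 < m * β := by have : 0 < m := by linarith
                             positivity
  have hrdlim : Tendsto rd (𝓝[<] L) (𝓝 (-1)) := by
    have h1 := hK2.div hG hmβ.ne'
    rw [neg_div, div_self hmβ.ne'] at h1
    refine h1.congr' ?_
    filter_upwards [hr, hφ] with s h1 h2
    have h3 : ‖γ s‖ ^ (1 - m) * ‖gradient f (γ s)‖ ≠ 0 := by positivity
    exact mul_div_cancel_right₀ _ h3
  have hdir : Tendsto (fun s => ‖gradient f (γ s)‖⁻¹ • gradient f (γ s) + ‖γ s‖⁻¹ • γ s)
      (𝓝[<] L) (𝓝 0) := by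
    have h1 : Tendsto (fun s => Real.sqrt (2 + 2 * rd s)) (𝓝[<] L) (𝓝 0) := by
      have := ((hrdlim.const_mul 2).const_add 2).sqrt
      simpa using this
    rw [tendsto_zero_iff_norm_tendsto_zero]
    refine h1.congr' ?_
    filter_upwards [hr, hνn] with s h1 h2
    have h3 : ‖‖γ s‖⁻¹ • γ s‖ = 1 := by
      rw [norm_smul, norm_inv, norm_norm, inv_mul_cancel₀ h1.ne']
    rw [← Real.sqrt_sq (norm_nonneg (_ + _)), norm_add_sq_real, h2, h3]
    congr 1
    rw [inner_smul_right, real_inner_comm]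
    simp only [hrddef]
    ring
  have hv : ∀ v : EuclideanSpace ℝ (Fin n), Tendsto (fun s =>
      ‖γ s‖ * ⟪gradient (fun x => ‖x‖ ^ ((1 : ℝ) - m) * ‖gradient f x‖) (γ s), v⟫)
      (𝓝[<] L) (𝓝 0) := by
    intro v
    obtain ⟨T, hT⟩ : ∃ T, Tendsto (fun s => ⟪γ s, v⟫ * ‖γ s‖⁻¹) (𝓝[<] L) (𝓝 T) := by
      apply exists_lim_of_comp (C := ‖v‖)
      · apply comp_of_osc hcont hγlim hosc (A := fun x => ⟪x, v⟫) (B := fun x => ‖x‖ ^ 2)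
          (A1 := fun x => ⟪x, v⟫ ^ 2) (han_v v _ analyticAt_id) han_r
          ((han_v v _ analyticAt_id).pow 2) (w := fun s => ‖γ s‖⁻¹) one_ne_zero
        · filter_upwards [] with s
          exact ⟨rfl, by positivity⟩
        · filter_upwards [hr] with s h1
          positivity
        · filter_upwards [hr] with s h1
          field_simp
      · filter_upwards [hr] with s h1
        rw [abs_mul, abs_inv, abs_norm, ← div_eq_mul_inv, div_le_iff₀ h1, mul_comm]
        exact abs_real_inner_le_norm _ _
    set a : ℝ → ℝ := fun s => ⟪gradient f (γ s), v⟫ with hadef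
    set ad : ℝ → ℝ := fun s => ⟪fderiv ℝ (gradient f) (γ s)
      (‖gradient f (γ s)‖⁻¹ • gradient f (γ s)), v⟫ with haddef
    have had : ∀ᶠ s in 𝓝[<] L, HasDerivAt a (ad s) s := by
      filter_upwards [hE] with s hs
      have h1 := (grad_analytic (hfan _ (hγU s hs))).differentiableAt.hasFDerivAt.comp_hasDerivAt
        s (hγode s hs)
      have h2 := h1.inner ℝ (hasDerivAt_const s v)
      rw [inner_zero_right, zero_add] at h2
      exact h2
    have ha0 : Tendsto a (𝓝[<] L) (𝓝 0) := by
      have h1 : Tendsto (fun s => gradient f (γ s)) (𝓝[<] L) (𝓝 (gradient f 0)) :=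
        hgan.continuousAt.tendsto.comp hγlim
      rw [hgf0] at h1
      simpa using h1.inner (tendsto_const_nhds (x := v))
    have har : Tendsto (fun s => a s * ‖γ s‖ ^ (1 - m)) (𝓝[<] L) (𝓝 (-(m * β * T))) := by
      have h1 : Tendsto (fun s => ⟪‖gradient f (γ s)‖⁻¹ • gradient f (γ s) + ‖γ s‖⁻¹ • γ s, v⟫)
          (𝓝[<] L) (𝓝 0) := by
        simpa using hdir.inner (tendsto_const_nhds (x := v))
      have h2 := hG.mul (h1.sub hT)
      rw [zero_sub, mul_neg] at h2
      refine h2.congr' ?_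
      filter_upwards [hr, hφ] with s h3 h4
      simp only [hadef, inner_add_left, inner_smul_left]
      simp
      field_simp
      ring
    have hlim : Tendsto (fun s => ‖γ s‖ ^ (2 - m) * ad s) (𝓝[<] L)
        (𝓝 ((m - 1) * (m * β * T))) := by
      apply tendsto_of_comp
      · have hA : AnalyticAt ℝ (fun x => ⟪fderiv ℝ (gradient f) x (gradient f x), v⟫) 0 :=
          han_v v _ ((hgan.fderiv.contDiffAt (n := ⊤)).clm_apply
            (hgan.contDiffAt (n := ⊤))).analyticAt
        apply comp_of_osc hcont hγlim hosc
          (A := fun x => ⟪fderiv ℝ (gradient f) x (gradient f x), v⟫)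
          (B := fun x => (‖gradient f x‖ ^ 2) ^ N * (‖x‖ ^ 2) ^ p)
          (A1 := fun x => (⟪fderiv ℝ (gradient f) x (gradient f x), v⟫ ^ 2) ^ N *
            ((‖x‖ ^ 2) ^ N * (‖x‖ ^ 2) ^ N)) hA ((han_φ.pow N).mul (han_r.pow p))
          (((hA.pow 2).pow N).mul ((han_r.pow N).mul (han_r.pow N)))
          (w := fun s => ‖γ s‖ ^ (2 - m) * ‖gradient f (γ s)‖⁻¹) hN
        · filter_upwards [] with s
          refine ⟨?_, by positivity⟩
          simp only [haddef, map_smul, inner_smul_left]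
          simp
          ring
        · filter_upwards [hr, hφ] with s h1 h2
          positivity
        · filter_upwards [hr, hφ] with s h1 h2
          have e2 : ‖γ s‖ ^ (2 - m) = ‖γ s‖ * ‖γ s‖ ^ (1 - m) := by
            rw [show 2 - m = (1 - m) + 1 by ring, Real.rpow_add_one h1.ne', mul_comm]
          have e3 : ad s = ‖gradient f (γ s)‖⁻¹ *
              ⟪fderiv ℝ (gradient f) (γ s) (gradient f (γ s)), v⟫ := by
            simp only [haddef, map_smul, inner_smul_left]
            simp
          have e4 : (‖gradient f (γ s)‖⁻¹ ^ 2) ^ N * (‖gradient f (γ s)‖ ^ 2) ^ N = 1 := by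
            rw [← mul_pow, ← mul_pow, inv_mul_cancel₀ h2.ne']; simp
          rw [e2, e3]
          calc _ = (‖γ s‖ ^ 2) ^ N * (((‖γ s‖ ^ (1 - m)) ^ 2) ^ N * (‖γ s‖ ^ 2) ^ p) *
                ((‖gradient f (γ s)‖⁻¹ ^ 2) ^ N * (‖gradient f (γ s)‖ ^ 2) ^ N) *
                (⟪fderiv ℝ (gradient f) (γ s) (gradient f (γ s)), v⟫ ^ 2) ^ N := by
                  simp only [mul_pow]; ring
            _ = _ := by rw [e4, hpow _ h1]; ring
      · intro c hc h
        exact lhop hm hr hrd had hrdlim hr0 ha0 har hc h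
      · intro c hc h
        refine lhop (a := fun s => - a s) (ad := fun s => - ad s) (T := -(m * β * T)) (c := -c)
          hm hr hrd ?_ hrdlim hr0 ?_ ?_ ?_ ?_
        · filter_upwards [had] with s h1 using h1.neg
        · simpa using ha0.neg
        · simpa using har.neg
        · linarith
        · filter_upwards [h] with s h1
          linarith
    have hfin := ((hG.const_mul (1 - m)).mul hT).add hlim
    have e0 : (1 - m) * (m * β) * T + (m - 1) * (m * β * T) = 0 := by ring
    rw [e0] at hfin
    refine hfin.congr' ?_
    filter_upwards [hE, hr] with s hs h1
    rw [grad_g (hfan _ (hγU s hs)) (norm_pos_iff.1 h1) (hγreg s hs) m v]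
  have hvec : Tendsto (fun s => ‖γ s‖ •
      gradient (fun x => ‖x‖ ^ ((1 : ℝ) - m) * ‖gradient f x‖) (γ s)) (𝓝[<] L) (𝓝 0) := by
    have h1 : Tendsto (fun s => ∑ i, (‖γ s‖ * ⟪gradient (fun x => ‖x‖ ^ ((1 : ℝ) - m) *
        ‖gradient f x‖) (γ s), EuclideanSpace.basisFun (Fin n) ℝ i⟫) •
        EuclideanSpace.basisFun (Fin n) ℝ i) (𝓝[<] L)
        (𝓝 (∑ i, (0:ℝ) • EuclideanSpace.basisFun (Fin n) ℝ i)) :=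
      tendsto_finsetSum _ fun i _ => (hv _).smul_const _
    simp only [zero_smul, Finset.sum_const_zero] at h1
    refine h1.congr fun s => ?_
    conv_rhs => rw [← (EuclideanSpace.basisFun (Fin n) ℝ).sum_repr'
      (gradient (fun x => ‖x‖ ^ ((1 : ℝ) - m) * ‖gradient f x‖) (γ s))]
    rw [Finset.smul_sum]
    refine Finset.sum_congr rfl fun i _ => ?_
    rw [smul_smul, real_inner_comm]
  simpa [norm_smul] using hvec.norm
end
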